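/- arXiv:2405.04617 — 7 statements merged into one kernel-verified Lean document; each statement's English description precedes it below -/
import Mathlib

section
/- For all positive integers μ and t, there exists an integer K(μ,t) such that the following holds: every finite simple K_{t,t}-free graph G whose induced matching treewidth is at most μ has tree-independence number strictly less than K(μ,t). -/
open SimpleGraph

/-- A tree decomposition of a (finite, simple) graph `G`: a finite tree `T` together with
bags `bag x ⊆ V` such that every vertex is in a bag, every edge is inside some bag, and for
every vertex the set of nodes whose bag contains it induces a connected subtree of `T`. -/
structure TreeDecomp {V : Type} (G : SimpleGraph V) where
  ι : Type
  fintype_ι : Fintype ι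
  T : SimpleGraph ι
  isTree : T.IsTree
  bag : ι → Set V
  mem_bag : ∀ v : V, ∃ x : ι, v ∈ bag x
  edge_bag : ∀ ⦃u v : V⦄, G.Adj u v → ∃ x : ι, u ∈ bag x ∧ v ∈ bag x
  bag_conn : ∀ v : V, (T.induce {x : ι | v ∈ bag x}).Connected

/-- `a`, `b` enumerate the endpoints of an induced matching of size `n` in `G`:
the edges `a i — b i` are present, and endpoints of distinct edges are pairwise distinct
and non-adjacent. -/
def IsIndMatching {V : Type} (G : SimpleGraph V) {n : ℕ} (a b : Fin n → V) : Prop :=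
  (∀ i, G.Adj (a i) (b i)) ∧
  ∀ i j : Fin n, i ≠ j →
    a i ≠ a j ∧ a i ≠ b j ∧ b i ≠ a j ∧ b i ≠ b j ∧
    ¬ G.Adj (a i) (a j) ∧ ¬ G.Adj (a i) (b j) ∧ ¬ G.Adj (b i) (a j) ∧ ¬ G.Adj (b i) (b j)

/-- `μ(T,β) ≤ μ`: every induced matching touching a bag of the decomposition has size at
most `μ`. -/
def TreeDecomp.MuLE {V : Type} {G : SimpleGraph V} (td : TreeDecomp G) (μ : ℕ) : Prop :=
  ∀ (x : td.ι) (n : ℕ) (a b : Fin n → V),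
    IsIndMatching G a b → (∀ i, a i ∈ td.bag x ∨ b i ∈ td.bag x) → n ≤ μ

/-- `α(T,β) ≤ k`: every independent set contained in a single bag has size at most `k`. -/
def TreeDecomp.AlphaLE {V : Type} {G : SimpleGraph V} (td : TreeDecomp G) (k : ℕ) : Prop :=
  ∀ (x : td.ι) (I : Finset V), ↑I ⊆ td.bag x →
    ((I : Set V)).Pairwise (fun u v => ¬ G.Adj u v) → I.card ≤ k

/-- The induced matching treewidth `tree-μ(G)`: the least `n` admitting a tree decomposition
with `μ(T,β) ≤ n`. -/
noncomputable def treeMu {V : Type} (G : SimpleGraph V) : ℕ :=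
  sInf {n | ∃ td : TreeDecomp G, td.MuLE n}

/-- The tree-independence number `tree-α(G)`: the least `n` admitting a tree decomposition
with `α(T,β) ≤ n`. -/
noncomputable def treeAlpha {V : Type} (G : SimpleGraph V) : ℕ :=
  sInf {n | ∃ td : TreeDecomp G, td.AlphaLE n}

open scoped Classical in
lemma aux_kst {V : Type} {G : SimpleGraph V} {t : ℕ}
    (hG : IsEmpty (completeBipartiteGraph (Fin t) (Fin t) ↪g G)) (X Y : Finset V)
    (hX : ∀ x ∈ X, ∀ y ∈ X, ¬ G.Adj x y) (hY : ∀ x ∈ Y, ∀ y ∈ Y, ¬ G.Adj x y)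
    (h : ∀ x ∈ X, t ≤ (Y.filter (fun y => G.Adj x y)).card) : X.card < t * 2 ^ Y.card := by
  by_contra hc
  push Not at hc
  obtain ⟨Z, hZ, hZc⟩ := Finset.exists_le_card_fiber_of_mul_le_card_of_maps_to
    (s := X) (t := Y.powerset) (f := fun x => Y.filter (fun y => G.Adj x y)) (n := t)
    (by intro x _; simp) ⟨∅, by simp⟩ (by rw [Finset.card_powerset, mul_comm]; exact hc)
  obtain ⟨X', hX', hX'c⟩ := Finset.exists_subset_card_eq hZc
  have hx : ∀ x ∈ X', x ∈ X ∧ Y.filter (fun y => G.Adj x y) = Z := by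
    intro x hx; simpa using hX' hx
  have hZt : 0 < t → t ≤ Z.card := by
    intro ht
    obtain ⟨x, hx'⟩ : X'.Nonempty := by rw [← Finset.card_pos]; omega
    rw [← (hx x hx').2]; exact h x (hx x hx').1
  have hZt : t ≤ Z.card := by
    rcases Nat.eq_zero_or_pos t with h0 | h0
    · omega
    · exact hZt h0
  obtain ⟨Y', hY', hY'c⟩ := Finset.exists_subset_card_eq hZt
  have hadj : ∀ x ∈ X', ∀ y ∈ Y', G.Adj x y := by
    intro x hx' y hy
    have := hY' hy
    rw [← (hx x hx').2] at this
    exact (Finset.mem_filter.1 this).2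
  have hYs : Y' ⊆ Y := hY'.trans (by simpa using hZ)
  let e1 := (X'.equivFinOfCardEq hX'c).symm
  let e2 := (Y'.equivFinOfCardEq hY'c).symm
  refine hG.false ⟨⟨Sum.elim (fun i => (e1 i : V)) (fun i => (e2 i : V)), ?_⟩, ?_⟩
  · rintro (i | i) (j | j) hij
    · simpa using hij
    · exact absurd hij (hadj _ (e1 i).2 _ (e2 j).2).ne
    · exact absurd hij (hadj _ (e1 j).2 _ (e2 i).2).ne'
    · simpa using hij
  · rintro (i | i) (j | j)
    · exact iff_of_false (hX _ (hx _ (e1 i).2).1 _ (hx _ (e1 j).2).1) (by simp)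
    · exact iff_of_true (hadj _ (e1 i).2 _ (e2 j).2) (by simp)
    · exact iff_of_true (hadj _ (e1 j).2 _ (e2 i).2).symm (by simp)
    · exact iff_of_false (hY _ (hYs (e2 i).2) _ (hYs (e2 j).2)) (by simp)

open scoped Classical in
lemma aux_indep {α : Type} (r : α → α → Prop) (d n : ℕ) : ∀ (J : Finset α),
    (∀ j ∈ J, (J.filter (fun k => r j k)).card ≤ d) → n * (2 * d + 1) ≤ J.card →
    ∃ K ⊆ J, K.card = n ∧ ∀ a ∈ K, ∀ b ∈ K, a ≠ b → ¬ r a b := by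
  induction n with
  | zero => intro J _ _; exact ⟨∅, by simp, by simp, by simp⟩
  | succ n ih =>
    intro J hJ hc
    have hne : J.Nonempty := by
      rw [← Finset.card_pos]; nlinarith
    obtain ⟨j, hj, hjd⟩ : ∃ j ∈ J, (J.filter (fun k => r k j)).card ≤ d := by
      by_contra hcon
      push Not at hcon
      have h1 := Finset.sum_card_bipartiteAbove_eq_sum_card_bipartiteBelow (s := J) (t := J) r
      have h2 : ∑ a ∈ J, (Finset.bipartiteAbove r J a).card ≤ ∑ a ∈ J, d :=
        Finset.sum_le_sum (fun a ha => hJ a ha)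
      have h3 : ∑ a ∈ J, d < ∑ b ∈ J, (Finset.bipartiteBelow r J b).card :=
        Finset.sum_lt_sum_of_nonempty hne (fun a ha => hcon a ha)
      omega
    let D := insert j (J.filter (fun k => r j k) ∪ J.filter (fun k => r k j))
    have hD : D.card ≤ 2 * d + 1 := by
      have h1 := Finset.card_insert_le j (J.filter (fun k => r j k) ∪ J.filter (fun k => r k j))
      have h2 := Finset.card_union_le (J.filter (fun k => r j k)) (J.filter (fun k => r k j))
      have h3 := hJ j hj
      change (insert j (J.filter (fun k => r j k) ∪ J.filter (fun k => r k j))).card ≤ _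
      omega
    obtain ⟨K, hK, hKc, hKr⟩ := ih (J \ D) (by
        intro k hk
        refine (Finset.card_le_card ?_).trans (hJ k (Finset.mem_sdiff.1 hk).1)
        exact Finset.filter_subset_filter _ Finset.sdiff_subset) (by
        have := Finset.le_card_sdiff D J
        have : (n + 1) * (2 * d + 1) = n * (2 * d + 1) + (2 * d + 1) := by ring
        omega)
    have hKD : ∀ a ∈ K, a ∈ J ∧ a ≠ j ∧ ¬ r j a ∧ ¬ r a j := by
      intro a ha
      have := hK ha
      simp only [D, Finset.mem_sdiff, Finset.mem_insert, Finset.mem_union, Finset.mem_filter] at this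
      tauto
    refine ⟨insert j K, ?_, ?_, ?_⟩
    · intro a ha
      rcases Finset.mem_insert.1 ha with rfl | ha
      · exact hj
      · exact (hKD a ha).1
    · rw [Finset.card_insert_of_notMem (fun h => (hKD j h).2.1 rfl), hKc]
    · intro a ha b hb hab
      rcases Finset.mem_insert.1 ha with ha1 | ha1 <;>
        rcases Finset.mem_insert.1 hb with hb1 | hb1
      · exact absurd (ha1.trans hb1.symm) hab
      · subst ha1; exact (hKD b hb1).2.2.1
      · subst hb1; exact (hKD a ha1).2.2.2
      · exact hKr a ha1 b hb1 hab

/-- finset version of `MuLE` -/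
lemma aux_mu {V : Type} {G : SimpleGraph V} (td : TreeDecomp G) {μ : ℕ} (h : td.MuLE μ)
    (x : td.ι) {α : Type} (K : Finset α) (f g : α → V) (hfg : ∀ k ∈ K, G.Adj (f k) (g k))
    (hf : ∀ k ∈ K, ∀ l ∈ K, ¬ G.Adj (f k) (f l)) (hg : ∀ k ∈ K, ∀ l ∈ K, ¬ G.Adj (g k) (g l))
    (hx : ∀ k ∈ K, ∀ l ∈ K, k ≠ l → ¬ G.Adj (f k) (g l))
    (ht : ∀ k ∈ K, f k ∈ td.bag x ∨ g k ∈ td.bag x) : K.card ≤ μ := by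
  let e := K.equivFin.symm
  refine h x K.card (fun i => f (e i)) (fun i => g (e i)) ⟨fun i => hfg _ (e i).2, ?_⟩
    (fun i => ht _ (e i).2)
  intro i j hij
  have hne : (e i : α) ≠ e j := fun h => hij (e.injective (Subtype.ext h))
  have hi := (e i).2
  have hj := (e j).2
  have a1 := hfg _ hi
  have a2 := hfg _ hj
  have b1 := hx _ hi _ hj hne
  have b2 := hx _ hj _ hi hne.symm
  refine ⟨?_, ?_, ?_, ?_, hf _ hi _ hj, b1, fun h => b2 h.symm, hg _ hi _ hj⟩
  · intro h; simp only at h; rw [← h] at a2; exact b1 a2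
  · intro h; simp only at h; rw [h] at a1; exact hg _ hj _ hi a1
  · intro h; simp only at h; rw [← h] at a2; exact hg _ hi _ hj a2
  · intro h; simp only at h; rw [← h] at a2; exact b2 a2

/-- every independent subset of the neighbourhood has size `< L` -/
def AuxLow {V : Type} (G : SimpleGraph V) (L : ℕ) (v : V) : Prop :=
  ∀ J : Finset V, (∀ x ∈ J, ∀ y ∈ J, ¬ G.Adj x y) → (∀ x ∈ J, G.Adj v x) → J.card < L

lemma aux_match {V : Type} {G : SimpleGraph V} (td : TreeDecomp G) {μ L : ℕ} (h : td.MuLE μ)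
    (x : td.ι) (J : Finset V) (w : V → V) (hJ : ∀ x ∈ J, ∀ y ∈ J, ¬ G.Adj x y)
    (hw : ∀ j ∈ J, G.Adj j (w j)) (hww : ∀ j ∈ J, ∀ k ∈ J, ¬ G.Adj (w j) (w k))
    (hlow : ∀ j ∈ J, AuxLow G L (w j)) (ht : ∀ j ∈ J, j ∈ td.bag x ∨ w j ∈ td.bag x) :
    J.card ≤ (μ + 1) * (2 * L + 1) := by
  classical
  by_contra hc
  obtain ⟨K, hK, hKc, hKr⟩ := aux_indep (fun j k => G.Adj (w j) k) L (μ + 1) J (by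
    intro j hj
    refine (hlow j hj _ ?_ ?_).le
    · intro x hx y hy
      exact hJ _ (Finset.mem_filter.1 hx).1 _ (Finset.mem_filter.1 hy).1
    · intro x hx
      simpa using (Finset.mem_filter.1 hx).2) (by omega)
  have := aux_mu td h x K (fun j => j) w (fun k hk => hw k (hK hk))
    (fun k hk l hl => hJ k (hK hk) l (hK hl)) (fun k hk l hl => hww k (hK hk) l (hK hl))
    (fun k hk l hl hkl hadj => hKr l hl k hk hkl.symm hadj.symm) (fun k hk => ht k (hK hk))
  omega

lemma aux_trans (t m : ℕ) : ∃ L : ℕ, ∀ (V : Type) (G : SimpleGraph V),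
    IsEmpty (completeBipartiteGraph (Fin t) (Fin t) ↪g G) →
    ∀ (s : Finset V) (J : V → Finset V), s.card = m →
    (∀ a ∈ s, L ≤ (J a).card) → (∀ a ∈ s, ∀ x ∈ J a, ∀ y ∈ J a, ¬ G.Adj x y) →
    ∃ f : V → V, (∀ a ∈ s, f a ∈ J a) ∧ ∀ a ∈ s, ∀ b ∈ s, ¬ G.Adj (f a) (f b) := by
  classical
  induction m with
  | zero =>
    refine ⟨0, fun V G _ s J hs _ _ => ⟨id, ?_⟩⟩
    rw [Finset.card_eq_zero] at hs; subst hs; simp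
  | succ m ih =>
    obtain ⟨L, hL⟩ := ih
    refine ⟨L + t + m * (t * 2 ^ (L + t)) + 1, fun V G hG s J hs hJc hJ => ?_⟩
    obtain ⟨a, s', ha, rfl, hs'⟩ := Finset.card_eq_succ.1 hs
    have hsub : ∀ b : V, ∃ J' : Finset V, b ∈ s' → J' ⊆ J b ∧ J'.card = L + t := by
      intro b
      by_cases hb : b ∈ s'
      · obtain ⟨J', h1, h2⟩ := Finset.exists_subset_card_eq
          (show L + t ≤ (J b).card by have := hJc b (by simp [hb]); omega)
        exact ⟨J', fun _ => ⟨h1, h2⟩⟩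
      · exact ⟨∅, fun h => absurd h hb⟩
    choose J' hJ' using hsub
    let bad : V → Finset V := fun b => (J a).filter
      (fun x => t ≤ ((J' b).filter (fun y => G.Adj x y)).card)
    have hbad : ∀ b ∈ s', (bad b).card ≤ t * 2 ^ (L + t) := by
      intro b hb
      have := aux_kst hG (bad b) (J' b)
        (fun x hx y hy => hJ a (by simp) x (Finset.mem_filter.1 hx).1 y (Finset.mem_filter.1 hy).1)
        (fun x hx y hy => hJ b (by simp [hb]) x ((hJ' b hb).1 hx) y ((hJ' b hb).1 hy))
        (fun x hx => (Finset.mem_filter.1 hx).2)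
      rw [(hJ' b hb).2] at this
      exact this.le
    have hU : (s'.biUnion bad).card ≤ m * (t * 2 ^ (L + t)) := by
      have := Finset.card_biUnion_le_card_mul s' bad _ hbad
      rwa [hs'] at this
    obtain ⟨j, hj, hjb⟩ : ∃ j ∈ J a, j ∉ s'.biUnion bad := by
      by_contra hcon
      push Not at hcon
      have h1 := Finset.card_le_card (show J a ⊆ s'.biUnion bad from hcon)
      have h2 := hJc a (by simp)
      omega
    have hjb' : ∀ b ∈ s', ((J' b).filter (fun y => G.Adj j y)).card < t := by
      intro b hb
      by_contra hcon
      push Not at hcon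
      exact hjb (Finset.mem_biUnion.2 ⟨b, hb, Finset.mem_filter.2 ⟨hj, hcon⟩⟩)
    obtain ⟨f, hf, hff⟩ := hL V G hG s' (fun b => (J' b).filter (fun y => ¬ G.Adj j y)) hs'
      (by
        intro b hb
        have h1 := Finset.card_filter_add_card_filter_not (s := J' b) (fun y => G.Adj j y)
        have h2 := hjb' b hb
        have h3 := (hJ' b hb).2
        omega)
      (fun b hb x hx y hy => hJ b (by simp [hb]) x ((hJ' b hb).1 (Finset.mem_filter.1 hx).1) y
        ((hJ' b hb).1 (Finset.mem_filter.1 hy).1))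
    have hne : ∀ b ∈ s', b ≠ a := fun b hb h => ha (h ▸ hb)
    refine ⟨fun b => if b = a then j else f b, ?_, ?_⟩
    · intro b hb
      rcases Finset.mem_insert.1 hb with rfl | hb
      · simpa using hj
      · simp only [hne b hb, if_false]
        exact (hJ' b hb).1 (Finset.mem_filter.1 (hf b hb)).1
    · intro b hb c hc
      rcases Finset.mem_insert.1 hb with hb1 | hb1 <;>
        rcases Finset.mem_insert.1 hc with hc1 | hc1
      · simp [hb1, hc1]
      · simp only [hne c hc1, hb1, if_false, if_true]
        exact (Finset.mem_filter.1 (hf c hc1)).2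
      · simp only [hne b hb1, hc1, if_false, if_true]
        exact fun h => (Finset.mem_filter.1 (hf b hb1)).2 h.symm
      · simp only [hne c hc1, hne b hb1, if_false]
        exact hff b hb1 c hc1

lemma aux_high (t μ : ℕ) : ∃ L n : ℕ, ∀ (V : Type) (G : SimpleGraph V),
    IsEmpty (completeBipartiteGraph (Fin t) (Fin t) ↪g G) →
    ∀ (td : TreeDecomp G), td.MuLE μ → ∀ (x : td.ι) (A : Finset V),
    (∀ a ∈ A, a ∈ td.bag x) → (∀ a ∈ A, ∀ b ∈ A, ¬ G.Adj a b) →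
    (∀ a ∈ A, ¬ AuxLow G L a) → A.card ≤ n := by
  classical
  obtain ⟨L', hL'⟩ := aux_trans t (μ + 1)
  let L := L' + (μ + 1) * t
  refine ⟨L, (μ + 1) * (2 * (t * 2 ^ L) + 1), fun V G hG td htd x A hAx hA hhigh => ?_⟩
  by_contra hc
  have hsub : ∀ a : V, ∃ J : Finset V, a ∈ A → (∀ x ∈ J, ∀ y ∈ J, ¬ G.Adj x y) ∧
      (∀ x ∈ J, G.Adj a x) ∧ J.card = L := by
    intro a
    by_cases ha : a ∈ A
    · have := hhigh a ha
      unfold AuxLow at this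
      push Not at this
      obtain ⟨J, h1, h2, h3⟩ := this
      obtain ⟨J', h4, h5⟩ := Finset.exists_subset_card_eq h3
      exact ⟨J', fun _ => ⟨fun x hx y hy => h1 x (h4 hx) y (h4 hy), fun x hx => h2 x (h4 hx), h5⟩⟩
    · exact ⟨∅, fun h => absurd h ha⟩
  choose J hJ using hsub
  obtain ⟨K, hK, hKc, hKr⟩ := aux_indep
    (fun a b => t ≤ ((J a).filter (fun y => G.Adj b y)).card) (t * 2 ^ L) (μ + 1) A (by
      intro a ha
      have := aux_kst hG (A.filter (fun b => t ≤ ((J a).filter (fun y => G.Adj b y)).card)) (J a)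
        (fun x hx y hy => hA x (Finset.mem_filter.1 hx).1 y (Finset.mem_filter.1 hy).1)
        (hJ a ha).1 (fun x hx => (Finset.mem_filter.1 hx).2)
      rw [(hJ a ha).2.2] at this
      refine le_trans (le_of_eq ?_) this.le
      congr 1
      ext; simp) (by omega)
  let B : V → Finset V := fun a => (K.erase a).biUnion (fun b => (J a).filter (fun y => G.Adj b y))
  have hB : ∀ a ∈ K, (B a).card ≤ (μ + 1) * t := by
    intro a ha
    have h1 := Finset.card_biUnion_le_card_mul (K.erase a)
      (fun b => (J a).filter (fun y => G.Adj b y)) t (by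
        intro b hb
        have hb' := Finset.mem_erase.1 hb
        exact (not_le.1 (hKr a ha b hb'.2 hb'.1.symm)).le)
    refine h1.trans (Nat.mul_le_mul_right _ ?_)
    rw [← hKc]; exact Finset.card_le_card (Finset.erase_subset _ _)
  obtain ⟨f, hf, hff⟩ := hL' V G hG K (fun a => J a \ B a) hKc
    (by
      intro a ha
      have h1 := Finset.le_card_sdiff (B a) (J a)
      have h2 := hB a ha
      have h3 := (hJ a (hK ha)).2.2
      simp only [L] at h3
      omega)
    (fun a ha x hx y hy => (hJ a (hK ha)).1 x (Finset.mem_sdiff.1 hx).1 y (Finset.mem_sdiff.1 hy).1)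
  have := aux_mu td htd x K (fun a => a) f
    (fun a ha => (hJ a (hK ha)).2.1 _ (Finset.mem_sdiff.1 (hf a ha)).1)
    (fun a ha b hb => hA a (hK ha) b (hK hb)) hff
    (by
      intro a ha b hb hab hadj
      have h1 := Finset.mem_sdiff.1 (hf b hb)
      exact h1.2 (Finset.mem_biUnion.2 ⟨a, Finset.mem_erase.2 ⟨hab, ha⟩,
        Finset.mem_filter.2 ⟨h1.1, hadj⟩⟩))
    (fun a ha => Or.inl (hAx a (hK ha)))
  omega

/-- the graph `T` with pendant vertices attached -/
def auxPend {ι κ : Type} (T : SimpleGraph ι) (f : κ → ι) : SimpleGraph (ι ⊕ κ) where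
  Adj a b := match a, b with
    | .inl x, .inl y => T.Adj x y
    | .inl x, .inr k => f k = x
    | .inr k, .inl x => f k = x
    | .inr _, .inr _ => False
  symm := ⟨by
    rintro (x | k) (y | l) h
    · exact T.adj_symm h
    · exact h
    · exact h
    · exact h⟩
  loopless := ⟨by
    rintro (x | k) h
    · exact T.loopless.irrefl _ h
    · exact h⟩


lemma auxPend_reach {ι κ : Type} (T : SimpleGraph ι) (f : κ → ι) (s : Set ι) (S : Set (ι ⊕ κ))
    (h : ∀ x ∈ s, Sum.inl x ∈ S) (hs : (T.induce s).Connected) (x y : ι) (hx : x ∈ s) (hy : y ∈ s) :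
    ((auxPend T f).induce S).Reachable ⟨Sum.inl x, h x hx⟩ ⟨Sum.inl y, h y hy⟩ := by
  have h1 := hs.preconnected ⟨x, hx⟩ ⟨y, hy⟩
  let φ : T.induce s →g (auxPend T f).induce S :=
    ⟨fun z => ⟨Sum.inl z.1, h z.1 z.2⟩, fun {a b} hab => hab⟩
  exact h1.map φ

lemma auxPend_isTree {ι κ : Type} [Finite ι] [Finite κ] (T : SimpleGraph ι) (f : κ → ι)
    (hT : T.IsTree) : (auxPend T f).IsTree := by
  have hconn : (auxPend T f).Connected := by
    obtain ⟨x0⟩ := hT.connected.nonempty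
    let φ : T →g auxPend T f := ⟨fun z => Sum.inl z, fun {a b} hab => hab⟩
    have h0 : ∀ z, (auxPend T f).Reachable (Sum.inl x0) z := by
      have hl : ∀ x, (auxPend T f).Reachable (Sum.inl x0) (Sum.inl x) :=
        fun x => (hT.connected.preconnected x0 x).map φ
      rintro (x | k)
      · exact hl x
      · exact (hl (f k)).trans
          (SimpleGraph.Adj.reachable (show (auxPend T f).Adj (Sum.inl (f k)) (Sum.inr k) from rfl))
    haveI : Nonempty (ι ⊕ κ) := ⟨Sum.inl x0⟩
    exact ⟨fun a b => (h0 a).symm.trans (h0 b)⟩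
  refine isTree_iff_connected_and_card.2 ⟨hconn, le_antisymm ?_ ?_⟩
  · have hTc := (isTree_iff_connected_and_card.1 hT).2
    let g : T.edgeSet ⊕ κ → Sym2 (ι ⊕ κ) :=
      Sum.elim (fun e => Sym2.map Sum.inl e.1) (fun k => s(Sum.inl (f k), Sum.inr k))
    have hsub : (auxPend T f).edgeSet ⊆ Set.range g := by
      intro e
      induction e using Sym2.ind with
      | _ a b =>
        intro he
        rcases a with x | k <;> rcases b with y | l
        · exact ⟨Sum.inl ⟨s(x, y), he⟩, rfl⟩
        · have he : f l = x := he
          exact ⟨Sum.inr l, by simp [g, he]⟩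
        · have he : f k = y := he
          exact ⟨Sum.inr k, by simp [g, he, Sym2.eq_swap]⟩
        · exact he.elim
    have h1 : Nat.card (auxPend T f).edgeSet ≤ Nat.card (Set.range g) :=
      Nat.card_mono (Set.toFinite _) hsub
    have h2 : Nat.card (Set.range g) ≤ Nat.card (T.edgeSet ⊕ κ) := Finite.card_range_le g
    rw [Nat.card_sum] at h2 ⊢
    omega
  · exact hconn.card_vert_le_card_edgeSet_add_one

lemma aux_split {V : Type} (I : Finset V) (p q : V → Prop) (k1 k2 k3 : ℕ)
    (h1 : ∀ J ⊆ I, (∀ j ∈ J, p j) → J.card ≤ k1) (h2 : ∀ J ⊆ I, (∀ j ∈ J, q j) → J.card ≤ k2)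
    (h3 : ∀ J ⊆ I, (∀ j ∈ J, ¬ p j ∧ ¬ q j) → J.card ≤ k3) : I.card ≤ k1 + k2 + k3 := by
  classical
  have e1 := Finset.card_filter_add_card_filter_not (s := I) p
  have e2 := Finset.card_filter_add_card_filter_not (s := I.filter (fun j => ¬ p j)) q
  have a1 := h1 (I.filter p) (Finset.filter_subset _ _) (fun j hj => (Finset.mem_filter.1 hj).2)
  have a2 := h2 ((I.filter (fun j => ¬ p j)).filter q)
    ((Finset.filter_subset _ _).trans (Finset.filter_subset _ _))
    (fun j hj => (Finset.mem_filter.1 hj).2)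
  have a3 := h3 ((I.filter (fun j => ¬ p j)).filter (fun j => ¬ q j))
    ((Finset.filter_subset _ _).trans (Finset.filter_subset _ _))
    (fun j hj => ⟨(Finset.mem_filter.1 (Finset.mem_filter.1 hj).1).2, (Finset.mem_filter.1 hj).2⟩)
  omega

lemma aux_exists_td {V : Type} [Fintype V] (G : SimpleGraph V) :
    ∃ td : TreeDecomp G, td.MuLE (treeMu G) := by
  have hne : {n | ∃ td : TreeDecomp G, td.MuLE n}.Nonempty := by
    refine ⟨Fintype.card V, ⟨Unit, inferInstance, ⊥, ?_, fun _ => Set.univ, fun v => ⟨(), trivial⟩,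
      fun u v _ => ⟨(), trivial, trivial⟩, fun v => ?_⟩, ?_⟩
    · exact IsTree.of_subsingleton
    · haveI : Nonempty {x : Unit | v ∈ (Set.univ : Set V)} := ⟨⟨(), trivial⟩⟩
      exact ⟨fun a b => by rw [Subsingleton.elim a b]⟩
    · intro x n a b hab _
      have : Function.Injective a := by
        intro i j hij
        by_contra hne
        exact (hab.2 i j hne).1 hij
      simpa using Fintype.card_le_of_injective a this
  exact Nat.sInf_mem hne

lemma aux_main {V : Type} [Fintype V] (G : SimpleGraph V) (td : TreeDecomp G) (μ L n : ℕ)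
    (hmu : td.MuLE μ)
    (hhigh : ∀ (x : td.ι) (A : Finset V), (∀ a ∈ A, a ∈ td.bag x) →
      (∀ a ∈ A, ∀ b ∈ A, ¬ G.Adj a b) → (∀ a ∈ A, ¬ AuxLow G L a) → A.card ≤ n) :
    ∃ td' : TreeDecomp G,
      td'.AlphaLE (n + (μ + 1) * (2 * L + 1) + (μ + 1) * (2 * L + 1) + L + 1) := by
  classical
  obtain ⟨A, -, hA⟩ := Finite.exists_le_maximal
    (p := fun A : Finset V => (∀ a ∈ A, AuxLow G L a) ∧ ∀ a ∈ A, ∀ b ∈ A, ¬ G.Adj a b)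
    (a := ∅) (by simp)
  obtain ⟨⟨hAlow, hAind⟩, hAmax⟩ := hA
  have hdom : ∀ v, AuxLow G L v → v ∉ A → ∃ a ∈ A, G.Adj v a := by
    intro v hv hvA
    by_contra hcon
    push Not at hcon
    refine hvA (hAmax (y := insert v A) ⟨?_, ?_⟩ (Finset.subset_insert _ _)
      (Finset.mem_insert_self _ _))
    · intro a ha
      rcases Finset.mem_insert.1 ha with h | h
      · exact h ▸ hv
      · exact hAlow a h
    · intro a ha b hb
      rcases Finset.mem_insert.1 ha with h | h <;> rcases Finset.mem_insert.1 hb with h' | h'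
      · rw [h, h']; exact G.irrefl
      · rw [h]; exact hcon b h'
      · rw [h']; exact fun hh => hcon a h hh.symm
      · exact hAind a h b h'
  choose c hc using td.mem_bag
  haveI := td.fintype_ι
  let T' := auxPend td.T (fun v : A => c v.1)
  let bag' : td.ι ⊕ A → Set V := fun z => match z with
    | .inl x => {u | u ∉ A ∧ (u ∈ td.bag x ∨ ∃ a ∈ A, a ∈ td.bag x ∧ G.Adj u a)}
    | .inr v => {u | u = v.1 ∨ G.Adj u v.1}
  have hl : ∀ x u, u ∈ bag' (.inl x) ↔
    (u ∉ A ∧ (u ∈ td.bag x ∨ ∃ a ∈ A, a ∈ td.bag x ∧ G.Adj u a)) := fun x u => Iff.rfl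
  have hr : ∀ (v : A) u, u ∈ bag' (.inr v) ↔ (u = v.1 ∨ G.Adj u v.1) := fun x u => Iff.rfl
  have hconn : ∀ u : V, (T'.induce {z | u ∈ bag' z}).Connected := by
    intro u
    by_cases hu : u ∈ A
    · have huniq : ∀ z, u ∈ bag' z → z = Sum.inr ⟨u, hu⟩ := by
        rintro (x | v) hz
        · exact absurd hu ((hl x u).1 hz).1
        · rcases (hr v u).1 hz with h | h
          · congr 1; exact Subtype.ext h.symm
          · exact absurd h (hAind u hu v.1 v.2)
      haveI : Nonempty {z | u ∈ bag' z} := ⟨⟨Sum.inr ⟨u, hu⟩, (hr _ _).2 (Or.inl rfl)⟩⟩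
      refine ⟨fun a b => ?_⟩
      have : a = b := Subtype.ext ((huniq _ a.2).trans (huniq _ b.2).symm)
      rw [this]
    · have h1 : ∀ x ∈ {x | u ∈ td.bag x}, (Sum.inl x : td.ι ⊕ A) ∈ {z | u ∈ bag' z} :=
        fun x hx => (hl x u).2 ⟨hu, Or.inl hx⟩
      have h2 : ∀ a ∈ A, G.Adj u a → ∀ x ∈ {x | a ∈ td.bag x},
          (Sum.inl x : td.ι ⊕ A) ∈ {z | u ∈ bag' z} :=
        fun a ha hua x hx => (hl x u).2 ⟨hu, Or.inr ⟨a, ha, hx, hua⟩⟩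
      let base : {z | u ∈ bag' z} := ⟨Sum.inl (c u), h1 _ (hc u)⟩
      have k1 : ∀ x (hx : u ∈ td.bag x), (T'.induce {z | u ∈ bag' z}).Reachable base
          ⟨Sum.inl x, h1 x hx⟩ :=
        fun x hx => auxPend_reach td.T _ _ _ h1 (td.bag_conn u) _ _ (hc u) hx
      have k2 : ∀ a (ha : a ∈ A) (hua : G.Adj u a) x (hx : a ∈ td.bag x),
          (T'.induce {z | u ∈ bag' z}).Reachable base ⟨Sum.inl x, h2 a ha hua x hx⟩ := by
        intro a ha hua x hx
        obtain ⟨y, hy1, hy2⟩ := td.edge_bag hua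
        exact (k1 y hy1).trans
          (auxPend_reach td.T _ _ _ (h2 a ha hua) (td.bag_conn a) _ _ hy2 hx)
      have k3 : ∀ z (hz : u ∈ bag' z), (T'.induce {z | u ∈ bag' z}).Reachable base ⟨z, hz⟩ := by
        rintro (x | v) hz
        · rcases ((hl x u).1 hz).2 with h | ⟨a, ha, hax, hua⟩
          · exact k1 x h
          · exact k2 a ha hua x hax
        · rcases (hr v u).1 hz with h | h
          · exact absurd (h ▸ v.2) hu
          · refine (k2 v.1 v.2 h (c v.1) (hc v.1)).trans (SimpleGraph.Adj.reachable ?_)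
            show T'.Adj (Sum.inl (c v.1)) (Sum.inr v)
            exact rfl
      haveI : Nonempty {z | u ∈ bag' z} := ⟨base⟩
      exact ⟨fun a b => (k3 a.1 a.2).symm.trans (k3 b.1 b.2)⟩
  refine ⟨⟨td.ι ⊕ A, inferInstance, T', auxPend_isTree _ _ td.isTree, bag', ?_, ?_, hconn⟩, ?_⟩
  · intro v
    by_cases hv : v ∈ A
    · exact ⟨Sum.inr ⟨v, hv⟩, (hr _ _).2 (Or.inl rfl)⟩
    · exact ⟨Sum.inl (c v), (hl _ _).2 ⟨hv, Or.inl (hc v)⟩⟩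
  · intro u v huv
    by_cases hu : u ∈ A
    · exact ⟨Sum.inr ⟨u, hu⟩, (hr _ _).2 (Or.inl rfl), (hr _ _).2 (Or.inr huv.symm)⟩
    by_cases hv : v ∈ A
    · exact ⟨Sum.inr ⟨v, hv⟩, (hr _ _).2 (Or.inr huv), (hr _ _).2 (Or.inl rfl)⟩
    obtain ⟨x, h1, h2⟩ := td.edge_bag huv
    exact ⟨Sum.inl x, (hl _ _).2 ⟨hu, Or.inl h1⟩, (hl _ _).2 ⟨hv, Or.inl h2⟩⟩
  · intro z I hI hind
    have hind' : ∀ x ∈ I, ∀ y ∈ I, ¬ G.Adj x y := by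
      intro x hx y hy hxy
      exact hind hx hy hxy.ne hxy
    rcases z with x | v
    · have hI' : ∀ j ∈ I, j ∉ A ∧ (j ∈ td.bag x ∨ ∃ a ∈ A, a ∈ td.bag x ∧ G.Adj j a) :=
        fun j hj => (hl x j).1 (hI hj)
      have key : ∀ J ⊆ I, (∀ j ∈ J, ∃ a ∈ A, G.Adj j a ∧ (j ∈ td.bag x ∨ a ∈ td.bag x)) →
          J.card ≤ (μ + 1) * (2 * L + 1) := by
        intro J hJ hJa
        have : ∀ j : V, ∃ a, j ∈ J → a ∈ A ∧ G.Adj j a ∧ (j ∈ td.bag x ∨ a ∈ td.bag x) := by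
          intro j
          by_cases hj : j ∈ J
          · obtain ⟨a, ha⟩ := hJa j hj
            exact ⟨a, fun _ => ha⟩
          · exact ⟨j, fun h => absurd h hj⟩
        choose w hw using this
        exact aux_match td hmu x J w (fun a ha b hb => hind' a (hJ ha) b (hJ hb))
          (fun j hj => (hw j hj).2.1) (fun j hj k hk => hAind _ (hw j hj).1 _ (hw k hk).1)
          (fun j hj => hAlow _ (hw j hj).1) (fun j hj => (hw j hj).2.2)
      have := aux_split I (fun j => j ∈ td.bag x ∧ ¬ AuxLow G L j)
        (fun j => j ∈ td.bag x ∧ AuxLow G L j) n ((μ + 1) * (2 * L + 1)) ((μ + 1) * (2 * L + 1))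
        (fun J hJ hp => hhigh x J (fun a ha => (hp a ha).1)
          (fun a ha b hb => hind' a (hJ ha) b (hJ hb)) (fun a ha => (hp a ha).2))
        (fun J hJ hp => key J hJ (fun j hj => by
          obtain ⟨a, ha, hja⟩ := hdom j (hp j hj).2 (hI' j (hJ hj)).1
          exact ⟨a, ha, hja, Or.inl (hp j hj).1⟩))
        (fun J hJ hp => key J hJ (fun j hj => by
          rcases (hI' j (hJ hj)).2 with h | ⟨a, ha, hax, hja⟩
          · have := hp j hj; tauto
          · exact ⟨a, ha, hja, Or.inr hax⟩))
      omega
    · have h1 := hAlow v.1 v.2 (I.erase v.1)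
        (fun a ha b hb => hind' a (Finset.mem_of_mem_erase ha) b (Finset.mem_of_mem_erase hb))
        (fun a ha => by
          have ha' := Finset.mem_erase.1 ha
          rcases (hr v a).1 (hI ha'.2) with h | h
          · exact absurd h ha'.1
          · exact h.symm)
      have h2 := Finset.pred_card_le_card_erase (s := I) (a := v.1)
      omega

/-- For all positive integers `μ` and `t`, there is an integer `K` such that every finite
`K_{t,t}`-free graph `G` with induced matching treewidth at most `μ` has tree-independence
number strictly less than `K`. -/
theorem stmt0 (μ t : ℕ) (hμ : 0 < μ) (ht : 0 < t) :
    ∃ K : ℕ, ∀ (V : Type) [Fintype V] (G : SimpleGraph V),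
      IsEmpty (completeBipartiteGraph (Fin t) (Fin t) ↪g G) →
      treeMu G ≤ μ → treeAlpha G < K := by
  obtain ⟨L, n, hLn⟩ := aux_high t μ
  refine ⟨n + (μ + 1) * (2 * L + 1) + (μ + 1) * (2 * L + 1) + L + 1 + 1,
    fun V _ G hG hmu => Nat.lt_succ_of_le ?_⟩
  obtain ⟨td, htd⟩ := aux_exists_td G
  have htd' : td.MuLE μ := fun x n a b h1 h2 => (htd x n a b h1 h2).trans hmu
  exact Nat.sInf_le (aux_main G td μ L n htd' (hLn V G hG td htd'))
end

section
/- There exists a function f : ℕ × ℕ → ℕ such that every finite simple graph G with induced matching treewidth at most μ and clique number at most ω satisfies χ(G) ≤ f(μ, ω). In other words, every class of graphs with bounded induced matching treewidth is χ-bounded. -/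
open SimpleGraph

namespace TMu

open Classical

variable {V : Type}

def Col (G : SimpleGraph V) (S : Set V) (n : ℕ) : Prop :=
  ∃ c : V → ℕ, (∀ v ∈ S, c v < n) ∧ ∀ u ∈ S, ∀ v ∈ S, G.Adj u v → c u ≠ c v

lemma Col.mono {G : SimpleGraph V} {S T : Set V} {n m : ℕ} (h : Col G T n) (hS : S ⊆ T)
    (hn : n ≤ m) : Col G S m := by
  obtain ⟨c, h1, h2⟩ := h
  exact ⟨c, fun v hv => lt_of_lt_of_le (h1 v (hS hv)) hn,
    fun u hu v hv => h2 u (hS hu) v (hS hv)⟩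

lemma col_union {G : SimpleGraph V} {S T : Set V} {n m : ℕ} (hS : Col G S n) (hT : Col G T m) :
    Col G (S ∪ T) (n + m) := by
  obtain ⟨c, h1, h2⟩ := hS
  obtain ⟨d, h3, h4⟩ := hT
  refine ⟨fun v => if v ∈ S then c v else n + d v, ?_, ?_⟩
  · intro v hv
    by_cases h : v ∈ S
    · have := h1 v h
      simp only [h, if_true]; omega
    · have := h3 v (hv.resolve_left h)
      simp only [h, if_false]; omega
  · intro u hu v hv huv
    by_cases h : u ∈ S <;> by_cases h' : v ∈ S
    · simpa [h, h'] using h2 u h v h' huv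
    · have := h1 u h
      simp only [h, h', if_true, if_false]; omega
    · have := h1 v h'
      simp only [h, h', if_true, if_false]; omega
    · have := h4 u (hu.resolve_left h) v (hv.resolve_left h') huv
      simp only [h, h', if_false]; omega

lemma col_biUnion {G : SimpleGraph V} {N : V → Set V} {c : ℕ} (R : Finset V)
    (h : ∀ r ∈ R, Col G (N r) c) : Col G {v | ∃ r ∈ R, v ∈ N r} (R.card * c) := by
  induction R using Finset.induction_on with
  | empty => exact ⟨fun _ => 0, by simp, by simp⟩
  | insert a s ha ih =>
    have h1 := col_union (h a (by simp)) (ih (fun r hr => h r (by simp [hr])))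
    refine h1.mono ?_ ?_
    · rintro v ⟨r, hr, hv⟩
      rcases Finset.mem_insert.1 hr with rfl | hr
      · exact Or.inl hv
      · exact Or.inr ⟨r, hr, hv⟩
    · rw [Finset.card_insert_of_notMem ha]; ring_nf; exact le_rfl

lemma col_fiber {G : SimpleGraph V} {S : Set V} {n : ℕ} {κ : Type} (f : V → κ)
    (hf : ∀ u ∈ S, ∀ v ∈ S, G.Adj u v → f u = f v)
    (h : ∀ i, Col G {v | v ∈ S ∧ f v = i} n) : Col G S n := by
  choose c h1 h2 using h
  refine ⟨fun v => c (f v) v, fun v hv => h1 _ v ⟨hv, rfl⟩, ?_⟩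
  intro u hu v hv huv
  have e := hf u hu v hv huv
  have := h2 (f v) u ⟨hu, e⟩ v ⟨hv, rfl⟩ huv
  simpa [e] using this

lemma col_prod {G : SimpleGraph V} {S : Set V} {n N : ℕ} (f : V → ℕ)
    (hf : ∀ u ∈ S, f u < N)
    (h : ∀ i, Col G {v | v ∈ S ∧ f v = i} n) : Col G S (N * n) := by
  choose c h1 h2 using h
  refine ⟨fun v => f v * n + c (f v) v, fun v hv => ?_, ?_⟩
  · have a := h1 _ v ⟨hv, rfl⟩
    have b := hf v hv
    show f v * n + c (f v) v < N * n
    have : (f v + 1) * n ≤ N * n := Nat.mul_le_mul_right _ b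
    nlinarith
  intro u hu v hv huv
  have a := h1 _ v ⟨hv, rfl⟩
  have b := h1 _ u ⟨hu, rfl⟩
  show f u * n + c (f u) u ≠ f v * n + c (f v) v
  intro e
  have hn : 0 < n := by omega
  have e1 : f u = f v := by
    have := congrArg (· / n) e
    simpa [Nat.mul_comm _ n, Nat.mul_add_div hn, Nat.div_eq_of_lt a, Nat.div_eq_of_lt b] using this
  have := h2 (f v) u ⟨hu, e1⟩ v ⟨hv, rfl⟩ huv
  rw [e1] at e
  omega

lemma ramsey (G : SimpleGraph V) : ∀ (n s t : ℕ) (A : Finset V), s + t = n → 2 ^ (s + t) ≤ A.card →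
    (∃ K ⊆ A, G.IsNClique s K) ∨
    (∃ I ⊆ A, I.card = t ∧ ∀ u ∈ I, ∀ v ∈ I, ¬ G.Adj u v) := by
  intro n
  induction n with
  | zero =>
    intro s t A hst hA
    left
    exact ⟨∅, by simp, by simp [show s = 0 by omega]⟩
  | succ n ih =>
    intro s t A hst hA
    rcases s with _ | s
    · left; exact ⟨∅, by simp, by simp⟩
    rcases t with _ | t
    · right; exact ⟨∅, by simp, by simp⟩
    have hpos : 0 < A.card := lt_of_lt_of_le (by positivity) hA
    obtain ⟨v, hv⟩ := Finset.card_pos.1 hpos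
    set B := (A.erase v).filter (fun w => G.Adj v w) with hB
    set C := (A.erase v).filter (fun w => ¬ G.Adj v w) with hC
    have hcard : B.card + C.card = A.card - 1 := by
      rw [hB, hC, Finset.card_filter_add_card_filter_not, Finset.card_erase_of_mem hv]
    have hp : 2 ^ (s + 1 + (t + 1)) = 2 * 2 ^ n := by
      rw [hst, pow_succ]; ring
    have hBA : B ⊆ A := (Finset.filter_subset _ _).trans (Finset.erase_subset _ _)
    have hCA : C ⊆ A := (Finset.filter_subset _ _).trans (Finset.erase_subset _ _)
    by_cases hb : 2 ^ n ≤ B.card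
    · rcases ih s (t + 1) B (by omega) (by rw [show s + (t + 1) = n by omega]; exact hb) with
        ⟨K, hK, hK'⟩ | ⟨I, hI, hI'⟩
      · left
        refine ⟨insert v K, ?_, hK'.insert ?_⟩
        · intro w hw
          rcases Finset.mem_insert.1 hw with rfl | hw
          · exact hv
          · exact hBA (hK hw)
        · intro b hb
          exact (Finset.mem_filter.1 (hK hb)).2
      · right
        exact ⟨I, hI.trans hBA, hI'⟩
    · have hc : 2 ^ n ≤ C.card := by omega
      rcases ih (s + 1) t C (by omega) (by rw [show s + 1 + t = n by omega]; exact hc) with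
        ⟨K, hK, hK'⟩ | ⟨I, hI, hI', hI''⟩
      · left
        exact ⟨K, hK.trans hCA, hK'⟩
      · right
        have hvI : v ∉ I := fun h => by
          have := hI h
          simp [hC] at this
        refine ⟨insert v I, ?_, by rw [Finset.card_insert_of_notMem hvI, hI'], ?_⟩
        · intro w hw
          rcases Finset.mem_insert.1 hw with rfl | hw
          · exact hv
          · exact hCA (hI hw)
        · have key : ∀ w ∈ I, ¬ G.Adj v w := fun w hw => (Finset.mem_filter.1 (hI hw)).2
          intro a ha b hb
          rcases Finset.mem_insert.1 ha with rfl | ha <;> rcases Finset.mem_insert.1 hb with rfl | hb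
          · exact G.irrefl
          · exact key b hb
          · exact fun h => key a (by assumption) h.symm
          · exact hI'' a ha b hb

/-- The abstract setting: a forest order on the vertices. -/
structure Hyp [PartialOrder V] (G : SimpleGraph V) (μ : ℕ) : Prop where
  chain : ∀ u v w : V, u ≤ w → v ≤ w → u ≤ v ∨ v ≤ u
  comp : ∀ u v : V, G.Adj u v → u ≤ v ∨ v ≤ u
  mu : ∀ (x : V) (n : ℕ) (a b : Fin n → V), IsIndMatching G a b →
    (∀ i, (a i ≤ x ∧ ∃ w, x ≤ w ∧ G.Adj (a i) w) ∨ (b i ≤ x ∧ ∃ w, x ≤ w ∧ G.Adj (b i) w)) →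
    n ≤ μ

def M (μ ω : ℕ) : ℕ := 2 ^ (ω + 2 ^ (ω + (μ + 1)))

lemma cover_col [PartialOrder V] [Fintype V] {G : SimpleGraph V} {μ ω c : ℕ} (hG : Hyp G μ)
    {H : Set V} (hH : G.CliqueFreeOn H (ω + 1))
    (hc : ∀ S : Set V, G.CliqueFreeOn S ω → Col G S c) (x : V) :
    Col G {v | v ∈ H ∧ x < v ∧ ∃ u ∈ H, u ≤ x ∧ G.Adj u v} (M μ (ω + 1) * c) := by
  set S := {v | v ∈ H ∧ x < v ∧ ∃ u ∈ H, u ≤ x ∧ G.Adj u v} with hS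
  let fam : Finset (Finset V) := Finset.univ.filter
    (fun R => (∀ u ∈ R, u ∈ H ∧ u ≤ x) ∧ ∀ v ∈ S, ∃ u ∈ R, G.Adj u v)
  have hne : fam.Nonempty := by
    refine ⟨Finset.univ.filter (fun u => u ∈ H ∧ u ≤ x), ?_⟩
    simp only [fam, Finset.mem_filter, Finset.mem_univ, true_and]
    refine ⟨fun u hu => hu, ?_⟩
    rintro v ⟨_, _, u, hu, hux, huv⟩
    exact ⟨u, ⟨hu, hux⟩, huv⟩
  obtain ⟨R, hR, hmin⟩ := Finset.exists_min_image fam Finset.card hne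
  simp only [fam, Finset.mem_filter, Finset.mem_univ, true_and] at hR hmin
  obtain ⟨hR1, hR2⟩ := hR
  have hpriv : ∀ r : V, ∃ b : V, r ∈ R → b ∈ S ∧ G.Adj r b ∧ ∀ r' ∈ R, r' ≠ r → ¬ G.Adj r' b := by
    intro r
    by_cases hr : r ∈ R
    swap
    · exact ⟨r, fun h => absurd h hr⟩
    by_contra hcon
    push Not at hcon
    have := hmin (R.erase r) ⟨fun u hu => hR1 u (Finset.mem_of_mem_erase hu), ?_⟩
    · have h2 := Finset.card_erase_lt_of_mem hr
      omega
    · intro v hv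
      obtain ⟨u, hu, huv⟩ := hR2 v hv
      by_cases hur : u = r
      · subst hur
        obtain ⟨r', hr', hne, hadj⟩ := (hcon v).2 hv huv
        exact ⟨r', Finset.mem_erase.2 ⟨hne, hr'⟩, hadj⟩
      · exact ⟨u, Finset.mem_erase.2 ⟨hur, hu⟩, huv⟩
  choose b hb using hpriv
  have hcard : R.card ≤ M μ (ω + 1) := by
    by_contra hlt
    push Not at hlt
    rcases ramsey G _ (ω + 1) (2 ^ (ω + 1 + (μ + 1))) R rfl hlt.le with
      ⟨K, hK, hK'⟩ | ⟨I, hI, hI', hI''⟩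
    · exact hH (fun u hu => (hR1 u (hK hu)).1) hK'
    have hinj : Set.InjOn b I := by
      intro u hu v hv huv
      by_contra hne
      have h1 := hb u (hI hu)
      have h2 := hb v (hI hv)
      apply h1.2.2 v (hI hv) (Ne.symm hne)
      rw [huv]; exact h2.2.1
    rcases ramsey G _ (ω + 1) (μ + 1) (I.image b) rfl
      (by rw [Finset.card_image_of_injOn hinj, hI']) with
      ⟨K, hK, hK'⟩ | ⟨J, hJ, hJ', hJ''⟩
    · refine hH (fun u hu => ?_) hK'
      obtain ⟨r, hr, rfl⟩ := Finset.mem_image.1 (hK hu)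
      exact (hb r (hI hr)).1.1
    let e := J.equivFinOfCardEq hJ'
    have hsel : ∀ i : Fin (μ + 1), ∃ r ∈ I, b r = (e.symm i : V) := fun i =>
      Finset.mem_image.1 (hJ (e.symm i).2)
    choose a ha hab using hsel
    have hbne : ∀ i j : Fin (μ + 1), i ≠ j → b (a i) ≠ b (a j) := by
      intro i j hij h
      rw [hab, hab] at h
      exact hij (e.symm.injective (Subtype.ext h))
    have hane : ∀ i j : Fin (μ + 1), i ≠ j → a i ≠ a j := fun i j hij h =>
      hbne i j hij (by rw [h])
    have hx : ∀ i j, a i ≠ b (a j) := by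
      intro i j h
      have h1 := (hR1 _ (hI (ha i))).2
      have h2 := (hb _ (hI (ha j))).1.2.1
      rw [h] at h1
      exact absurd h1 (not_le_of_gt h2)
    have := hG.mu x (μ + 1) a (fun i => b (a i)) ⟨fun i => (hb _ (hI (ha i))).2.1, ?_⟩ ?_
    · omega
    · intro i j hij
      refine ⟨hane i j hij, hx i j, (hx j i).symm, hbne i j hij, hI'' _ (ha i) _ (ha j), ?_, ?_, ?_⟩
      · exact (hb _ (hI (ha j))).2.2 _ (hI (ha i)) (hane i j hij)
      · intro h
        exact (hb _ (hI (ha i))).2.2 _ (hI (ha j)) (hane j i hij.symm) h.symm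
      · show ¬ G.Adj (b (a i)) (b (a j))
        rw [hab, hab]
        exact hJ'' _ (e.symm i).2 _ (e.symm j).2
    · intro i
      left
      have h1 := hb _ (hI (ha i))
      exact ⟨(hR1 _ (hI (ha i))).2, _, h1.1.2.1.le, h1.2.1⟩
  have h1 : Col G {v | ∃ r ∈ R, v ∈ {v | v ∈ H ∧ G.Adj r v}} (R.card * c) := by
    apply col_biUnion
    intro r hr
    apply hc
    intro K hK hK'
    refine hH (t := insert r K) ?_ (hK'.insert fun b hb => (hK hb).2)
    intro w hw
    rcases Finset.mem_insert.1 (Finset.mem_coe.1 hw) with rfl | hw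
    · exact (hR1 _ hr).1
    · exact (hK hw).1
  refine h1.mono ?_ (Nat.mul_le_mul_right _ hcard)
  intro v hv
  obtain ⟨u, hu, huv⟩ := hR2 v hv
  exact ⟨u, hu, hv.1, huv⟩

/-- `Reach G H k v`: at least `k` successive isolated edges of `H` below `v`. -/
def Reach [PartialOrder V] (G : SimpleGraph V) (H : Set V) : ℕ → V → Prop
  | 0, _ => True
  | k + 1, v => ∃ x a b : V, Reach G H k x ∧ x < a ∧ a < b ∧ b ≤ v ∧ a ∈ H ∧ b ∈ H ∧ G.Adj a b ∧
      ∀ u ∈ H, u ≤ x → ¬ G.Adj u a ∧ ¬ G.Adj u b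

lemma Reach.mono [PartialOrder V] {G : SimpleGraph V} {H : Set V} {k : ℕ} {v w : V}
    (h : Reach G H k v) (hvw : v ≤ w) : Reach G H k w := by
  cases k with
  | zero => trivial
  | succ k =>
    obtain ⟨x, a, b, h1, h2, h3, h4, h5⟩ := h
    exact ⟨x, a, b, h1, h2, h3, h4.trans hvw, h5⟩

lemma Reach.pred [PartialOrder V] {G : SimpleGraph V} {H : Set V} {k : ℕ} {v : V}
    (h : Reach G H (k + 1) v) : Reach G H k v := by
  obtain ⟨x, a, b, h1, h2, h3, h4, h5⟩ := h
  exact h1.mono ((h2.trans h3).le.trans h4)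

lemma Reach.anti [PartialOrder V] {G : SimpleGraph V} {H : Set V} {k l : ℕ} {v : V}
    (h : Reach G H k v) (hl : l ≤ k) : Reach G H l v := by
  induction k with
  | zero => obtain rfl : l = 0 := by omega
            exact h
  | succ k ih =>
    rcases Nat.lt_or_ge k l with h1 | h1
    · obtain rfl : l = k + 1 := by omega
      exact h
    · exact ih h.pred h1

lemma Reach.bound [PartialOrder V] [Fintype V] {G : SimpleGraph V} {H : Set V} {k : ℕ} :
    ∀ {v : V}, Reach G H k v → k ≤ (Finset.univ.filter (fun w => w ≤ v)).card := by
  induction k with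
  | zero => intros; omega
  | succ k ih =>
    rintro v ⟨x, a, b, h1, h2, h3, h4, h5⟩
    have hxv : x < v := (h2.trans h3).trans_le h4
    refine lt_of_le_of_lt (ih h1) (Finset.card_lt_card ?_)
    rw [Finset.ssubset_iff_of_subset]
    · exact ⟨v, by simp, by simpa using not_le_of_gt hxv⟩
    · intro w hw
      simp only [Finset.mem_filter, Finset.mem_univ, true_and] at hw ⊢
      exact hw.trans hxv.le

lemma Reach.bound' [PartialOrder V] [Fintype V] {G : SimpleGraph V} {H : Set V} {k : ℕ}
    {v : V} (h : Reach G H k v) : k ≤ Fintype.card V :=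
  h.bound.trans (Finset.card_le_univ _)

lemma Reach.unroll [PartialOrder V] {G : SimpleGraph V} {H : Set V} {k n : ℕ} :
    ∀ {y : V}, Reach G H (k + n) y → ∃ x a b : ℕ → V, x n = y ∧ ∀ i < n, Reach G H (k + i) (x i) ∧
      x i < a i ∧ a i < b i ∧ b i ≤ x (i + 1) ∧ a i ∈ H ∧ b i ∈ H ∧ G.Adj (a i) (b i) ∧
      ∀ u ∈ H, u ≤ x i → ¬ G.Adj u (a i) ∧ ¬ G.Adj u (b i) := by
  induction n with
  | zero => intro y _; exact ⟨fun _ => y, fun _ => y, fun _ => y, rfl, by simp⟩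
  | succ n ih =>
    rintro y ⟨x', a', b', h1, h2⟩
    obtain ⟨x, a, b, hx, h⟩ := ih h1
    refine ⟨fun i => if i ≤ n then x i else y, fun i => if i < n then a i else a',
      fun i => if i < n then b i else b', by simp, ?_⟩
    intro i hi
    rcases Nat.lt_or_ge i n with hin | hin
    · have := h i hin
      simpa [hin, hin.le, Nat.succ_le_of_lt hin] using this
    · obtain rfl : i = n := by omega
      subst hx
      simpa using ⟨h1, h2⟩

lemma piece_col [PartialOrder V] [Fintype V] {G : SimpleGraph V} {μ ω c : ℕ} (hG : Hyp G μ)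
    {H : Set V} (hH : G.CliqueFreeOn H (ω + 1))
    (hc : ∀ S : Set V, G.CliqueFreeOn S ω → Col G S c) (k : ℕ) :
    Col G {v | v ∈ H ∧ Reach G H k v ∧ ¬ Reach G H (k + 1) v} (M μ (ω + 1) * c + 2) := by
  have hX : ∀ v : V, ∃ x : V, Reach G H k v → x ≤ v ∧ Reach G H k x ∧
      ∀ w ≤ v, Reach G H k w → x ≤ w := by
    intro v
    by_cases hv : Reach G H k v
    swap
    · exact ⟨v, fun h => absurd h hv⟩
    obtain ⟨x, hx⟩ := Set.Finite.exists_minimal (s := {w | w ≤ v ∧ Reach G H k w})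
      (Set.toFinite _) ⟨v, le_rfl, hv⟩
    refine ⟨x, fun _ => ⟨hx.1.1, hx.1.2, fun w hw hw' => ?_⟩⟩
    rcases hG.chain x w v hx.1.1 hw with h | h
    · exact h
    · exact hx.2 ⟨hw, hw'⟩ h
  choose X hX using hX
  have hmono : ∀ u v, u ≤ v → Reach G H k u → X u = X v := by
    intro u v huv hu
    obtain ⟨a1, a2, a3⟩ := hX u hu
    obtain ⟨b1, b2, b3⟩ := hX v (hu.mono huv)
    have h1 : X v ≤ X u := b3 _ (a1.trans huv) a2
    exact le_antisymm (a3 _ (h1.trans a1) b2) h1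
  apply col_fiber X
  · rintro u ⟨hu, hu', -⟩ v ⟨hv, hv', -⟩ huv
    rcases hG.comp u v huv with h | h
    · exact hmono u v h hu'
    · exact (hmono v u h hv').symm
  · intro x
    have h1 : Col G {x} 1 := ⟨fun _ => 0, by simp, by
      rintro u rfl v rfl h
      exact absurd h G.irrefl⟩
    have h2 : Col G {v | v ∈ H ∧ Reach G H k v ∧ ¬ Reach G H (k + 1) v ∧ X v = x ∧ x < v ∧
        ∀ u ∈ H, u ≤ x → ¬ G.Adj u v} 1 := by
      refine ⟨fun _ => 0, by simp, ?_⟩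
      have key : ∀ u v : V, u ≤ v → (u ∈ H ∧ Reach G H k u ∧ ¬ Reach G H (k + 1) u ∧ X u = x ∧
          x < u ∧ ∀ w ∈ H, w ≤ x → ¬ G.Adj w u) → (v ∈ H ∧ Reach G H k v ∧ ¬ Reach G H (k + 1) v ∧
          X v = x ∧ x < v ∧ ∀ w ∈ H, w ≤ x → ¬ G.Adj w v) → ¬ G.Adj u v := by
        rintro u v huv ⟨u1, u2, u3, u4, u5, u6⟩ ⟨v1, v2, v3, v4, v5, v6⟩ hadj
        apply v3
        refine ⟨x, u, v, ?_, u5, lt_of_le_of_ne huv hadj.ne, le_rfl, u1, v1, hadj,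
          fun w hw hwx => ⟨u6 w hw hwx, v6 w hw hwx⟩⟩
        rw [← u4]
        exact (hX u u2).2.1
      intro u hu v hv huv
      exfalso
      rcases hG.comp u v huv with h | h
      · exact key u v h hu hv huv
      · exact key v u h hv hu huv.symm
    refine ((col_union (cover_col hG hH hc x) (col_union h1 h2))).mono ?_ le_rfl
    rintro v ⟨⟨hv, hv', hv''⟩, hvx⟩
    have hle : x ≤ v := by rw [← hvx]; exact (hX v hv').1
    rcases eq_or_lt_of_le hle with h | h
    · right; left; exact h.symm
    · by_cases hu : ∃ u ∈ H, u ≤ x ∧ G.Adj u v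
      · left; exact ⟨hv, h, hu⟩
      · right; right
        push Not at hu
        exact ⟨hv, hv', hv'', hvx, h, hu⟩

def Tower [PartialOrder V] (G : SimpleGraph V) (q : ℕ) : ℕ → Set V → Prop
  | 0, _ => True
  | t + 1, H' => ∃ H, H' ⊆ H ∧ Tower G q t H ∧ ∀ u ∈ H', ∀ v ∈ H', u < v → G.Adj u v →
      ∃ k, ¬ Reach G H (k + 1) u ∧ Reach G H (k + q) v

lemma tower_false [PartialOrder V] {G : SimpleGraph V} {μ : ℕ} (hG : Hyp G μ) (t : ℕ) :
    ∀ (H : Set V) (j : ℕ) (u v : Fin j → V) (i0 : Fin j),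
    Tower G ((μ + 1) * μ + 2) t H → (∀ i, u i ∈ H ∧ v i ∈ H) → IsIndMatching G u v →
    (∀ i, u i ≤ u i0 ∧ u i0 < v i0 ∧ v i0 ≤ v i) → j + t = μ + 1 → False := by
  induction t with
  | zero =>
    intro H j u v i0 _ hm huv hn hj
    have := hG.mu (u i0) j u v huv (fun i => Or.inl ⟨(hn i).1, v i, (hn i).2.1.le.trans (hn i).2.2,
      huv.1 i⟩)
    omega
  | succ t ih =>
    rintro H' j u v i0 ⟨H, hHH, hT, hjump⟩ hm huv hn hj
    obtain ⟨k, hk1, hk2⟩ := hjump (u i0) (hm i0).1 (v i0) (hm i0).2 (hn i0).2.1 (huv.1 i0)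
    obtain ⟨x, a, b, hx, h⟩ := hk2.unroll
    set q := (μ + 1) * μ + 2 with hq
    have hxm : ∀ d i, i + d ≤ q → x i ≤ x (i + d) := by
      intro d
      induction d with
      | zero => intros; exact le_rfl
      | succ d ihd =>
        intro i hi
        have := h (i + d) (by omega)
        exact (ihd i (by omega)).trans
          ((this.2.1.le.trans this.2.2.1.le).trans this.2.2.2.1)
    have hxm' : ∀ i i', i ≤ i' → i' ≤ q → x i ≤ x i' := by
      intro i i' h1 h2
      obtain ⟨d, rfl⟩ := Nat.exists_eq_add_of_le h1
      exact hxm d i h2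
    have hxu : ∀ i, 1 ≤ i → i < q → u i0 < x i := by
      intro i h1 h2
      have h3 : ¬ x i ≤ u i0 := fun h4 =>
        hk1 (((h i h2).1.anti (by omega)).mono h4)
      rcases hG.chain (u i0) (x i) (v i0) (hn i0).2.1.le (hx ▸ hxm' i q h2.le le_rfl) with h5 | h5
      · exact lt_of_le_of_ne h5 (fun h6 => h3 h6.ge)
      · exact absurd h5 h3
    have hbv : ∀ i, i < q → b i ≤ v i0 := fun i hi =>
      (h i hi).2.2.2.1.trans (hx ▸ hxm' (i + 1) q hi le_rfl)
    -- pairwise anticomplete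
    have hpair : ∀ i i', i < i' → i' < q → a i ≠ a i' ∧ a i ≠ b i' ∧ b i ≠ a i' ∧ b i ≠ b i' ∧
        ¬ G.Adj (a i) (a i') ∧ ¬ G.Adj (a i) (b i') ∧ ¬ G.Adj (b i) (a i') ∧
        ¬ G.Adj (b i) (b i') := by
      intro i i' h1 h2
      obtain ⟨-, p1, p2, p3, p4, p5, p6, p7⟩ := h i (by omega)
      obtain ⟨-, r1, r2, r3, r4, r5, r6, r7⟩ := h i' h2
      have hbx : b i ≤ x i' := p3.trans (hxm' (i + 1) i' h1 h2.le)
      have hax : a i ≤ x i' := p2.le.trans hbx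
      exact ⟨(hax.trans_lt r1).ne, (hax.trans_lt (r1.trans r2)).ne, (hbx.trans_lt r1).ne,
        (hbx.trans_lt (r1.trans r2)).ne, (r7 _ p4 hax).1, (r7 _ p4 hax).2, (r7 _ p5 hbx).1,
        (r7 _ p5 hbx).2⟩
    -- find an edge not adjacent to any v
    have hex : ∃ i, 1 ≤ i ∧ i < q ∧ ∀ l, ¬ G.Adj (a i) (v l) ∧ ¬ G.Adj (b i) (v l) := by
      by_contra hcon
      push Not at hcon
      have hsel : ∀ i, ∃ l : Fin j, 1 ≤ i → i < q → (G.Adj (a i) (v l) ∨ G.Adj (b i) (v l)) := by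
        intro i
        by_cases hi : 1 ≤ i ∧ i < q
        · obtain ⟨l, hl⟩ := hcon i hi.1 hi.2
          exact ⟨l, fun _ _ => by tauto⟩
        · exact ⟨i0, fun h1 h2 => absurd ⟨h1, h2⟩ hi⟩
      choose L hL using hsel
      obtain ⟨l, -, hl⟩ := Finset.exists_lt_card_fiber_of_mul_lt_card_of_maps_to
        (s := Finset.Ico 1 q) (t := (Finset.univ : Finset (Fin j))) (f := L) (n := μ)
        (fun _ _ => Finset.mem_univ _) (by
          simp only [Finset.card_univ, Fintype.card_fin, Nat.card_Ico]
          have : j * μ ≤ (μ + 1) * μ := Nat.mul_le_mul_right _ (by omega)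
          omega)
      set F := (Finset.Ico 1 q).filter (fun i => L i = l) with hF
      let e := F.orderEmbOfFin rfl
      have he : ∀ i, 1 ≤ e i ∧ e i < q ∧ L (e i) = l := by
        intro i
        have hmem : ∀ z, z ∈ F → (1 ≤ z ∧ z < q) ∧ L z = l := by
          intro z hz
          rwa [hF, Finset.mem_filter, Finset.mem_Ico] at hz
        have := hmem _ (F.orderEmbOfFin_mem rfl i)
        exact ⟨this.1.1, this.1.2, this.2⟩
      have := hG.mu (v i0) F.card (a ∘ e) (b ∘ e) ⟨fun i => (h (e i) (he i).2.1).2.2.2.2.2.2.1, ?_⟩ ?_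
      · omega
      · intro i i' hne
        rcases lt_or_gt_of_ne hne with hlt | hlt
        · exact hpair _ _ (e.strictMono hlt) (he i').2.1
        · obtain ⟨p1, p2, p3, p4, p5, p6, p7, p8⟩ := hpair _ _ (e.strictMono hlt) (he i).2.1
          exact ⟨p1.symm, p3.symm, p2.symm, p4.symm, fun h => p5 h.symm, fun h => p7 h.symm,
            fun h => p6 h.symm, fun h => p8 h.symm⟩
      · intro i
        have hv : v i0 ≤ v l := (hn l).2.2
        have hb' := hbv (e i) (he i).2.1
        have ha' := (h (e i) (he i).2.1).2.2.1.le.trans hb'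
        rcases hL (e i) (he i).1 (he i).2.1 with h1 | h1
        · rw [(he i).2.2] at h1
          exact Or.inl ⟨ha', _, hv, h1⟩
        · rw [(he i).2.2] at h1
          exact Or.inr ⟨hb', _, hv, h1⟩
    obtain ⟨i, hi1, hiq, hi⟩ := hex
    obtain ⟨-, p1, p2, p3, p4, p5, p6, p7⟩ := h i hiq
    have hux : ∀ l, u l < x i := fun l => (hn l).1.trans_lt (hxu i hi1 hiq)
    have hua : ∀ l, ¬ G.Adj (u l) (a i) := fun l => (p7 _ (hHH (hm l).1) (hux l).le).1
    have hub : ∀ l, ¬ G.Adj (u l) (b i) := fun l => (p7 _ (hHH (hm l).1) (hux l).le).2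
    have n1 : ∀ l, u l ≠ a i := fun l => ((hux l).trans p1).ne
    have n2 : ∀ l, u l ≠ b i := fun l => ((hux l).trans (p1.trans p2)).ne
    have n3 : ∀ l, v l ≠ a i := fun l hl => hua l (hl ▸ huv.1 l)
    have n4 : ∀ l, v l ≠ b i := fun l hl => hub l (hl ▸ huv.1 l)
    refine ih H (j + 1) (Fin.cons (a i) u) (Fin.cons (b i) v) 0 hT ?_ ⟨?_, ?_⟩ ?_ (by omega)
    · intro l
      refine Fin.cases ?_ (fun l => ?_) l
      · exact ⟨p4, p5⟩
      · exact ⟨hHH (hm l).1, hHH (hm l).2⟩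
    · intro l
      refine Fin.cases ?_ (fun l => ?_) l
      · exact p6
      · exact huv.1 l
    · intro l l'
      refine Fin.cases ?_ (fun l => ?_) l <;> refine Fin.cases ?_ (fun l' => ?_) l'
      · intro h; exact absurd rfl h
      · intro _
        simp only [Fin.cons_zero, Fin.cons_succ]
        exact ⟨(n1 l').symm, (n3 l').symm, (n2 l').symm, (n4 l').symm, fun h => hua l' h.symm,
          (hi l').1, fun h => hub l' h.symm, (hi l').2⟩
      · intro _
        simp only [Fin.cons_zero, Fin.cons_succ]
        exact ⟨n1 l, n2 l, n3 l, n4 l, hua l, hub l, fun h => (hi l).1 h.symm,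
          fun h => (hi l).2 h.symm⟩
      · intro hne
        simp only [Fin.cons_succ]
        exact huv.2 l l' (fun h => hne (by rw [h]))
    · intro l
      refine Fin.cases ?_ (fun l => ?_) l
      · exact ⟨le_rfl, p2, le_rfl⟩
      · exact ⟨((hux l).trans p1).le, p2, (hbv i hiq).trans (hn l).2.2⟩

lemma tower_col [PartialOrder V] [Fintype V] {G : SimpleGraph V} {μ ω c : ℕ} (hG : Hyp G μ)
    (hc : ∀ S : Set V, G.CliqueFreeOn S ω → Col G S c) (s : ℕ) :
    ∀ (t : ℕ) (H : Set V), G.CliqueFreeOn H (ω + 1) → t + s = μ →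
      Tower G ((μ + 1) * μ + 2) t H →
      Col G H ((((μ + 1) * μ + 2) * (M μ (ω + 1) * c + 2)) ^ s) := by
  induction s with
  | zero =>
    intro t H hH ht hT
    refine ⟨fun _ => 0, by simp, ?_⟩
    have key : ∀ u ∈ H, ∀ v ∈ H, u ≤ v → ¬ G.Adj u v := by
      intro u hu v hv huv hadj
      refine tower_false hG t H 1 (fun _ => u) (fun _ => v) 0 hT (fun _ => ⟨hu, hv⟩)
        ⟨fun _ => hadj, fun i j hij => absurd (Subsingleton.elim i j) hij⟩
        (fun _ => ⟨le_rfl, lt_of_le_of_ne huv hadj.ne, le_rfl⟩) (by omega)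
    intro u hu v hv huv
    exfalso
    rcases hG.comp u v huv with h | h
    · exact key u hu v hv h huv
    · exact key v hv u hu h huv.symm
  | succ s ih =>
    intro t H hH ht hT
    set q := (μ + 1) * μ + 2 with hq
    set A := M μ (ω + 1) * c + 2 with hA
    let lam : V → ℕ := fun v => Nat.findGreatest (fun k => Reach G H k v) (Fintype.card V)
    have hl1 : ∀ v, Reach G H (lam v) v := fun v =>
      Nat.findGreatest_spec (P := fun k => Reach G H k v) (Nat.zero_le _) trivial
    have hl2 : ∀ v k, Reach G H k v → k ≤ lam v := fun v k hk =>
      Nat.le_findGreatest hk.bound' hk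
    choose cc h1 h2 using fun k => piece_col hG hH hc k
    have hpc : ∀ v ∈ H, v ∈ {v | v ∈ H ∧ Reach G H (lam v) v ∧ ¬ Reach G H (lam v + 1) v} := by
      intro v hv
      refine ⟨hv, hl1 v, fun h => ?_⟩
      have := hl2 _ _ h
      omega
    rw [pow_succ', mul_assoc]
    apply col_prod (fun v => lam v % q) (fun u _ => Nat.mod_lt _ (by omega))
    intro r
    apply col_prod (fun v => cc (lam v) v)
    · rintro u ⟨hu, -⟩
      exact h1 (lam u) u (by have := hpc u hu; exact this)
    intro i
    apply ih (t + 1) _ _ (by omega)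
    · refine ⟨H, fun v hv => hv.1.1, hT, ?_⟩
      rintro u ⟨⟨hu, hur⟩, hui⟩ v ⟨⟨hv, hvr⟩, hvi⟩ huv hadj
      have hle : lam u ≤ lam v := hl2 _ _ ((hl1 u).mono huv.le)
      have hne : lam u ≠ lam v := by
        intro he
        refine h2 (lam v) u ?_ v (hpc v hv) hadj ?_
        · rw [← he]
          exact hpc u hu
        · have e1 : cc (lam u) u = i := hui
          have e2 : cc (lam v) v = i := hvi
          rw [e2, ← e1, he]
      refine ⟨lam u, fun h => ?_, (hl1 v).anti ?_⟩
      · have := hl2 _ _ h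
        omega
      · have hmod : lam u ≡ lam v [MOD q] := by
          show lam u % q = lam v % q
          have e1 : lam u % q = r := hur
          have e2 : lam v % q = r := hvr
          rw [e1, e2]
        have hd := (Nat.modEq_iff_dvd' hle).1 hmod
        have := Nat.le_of_dvd (by omega) hd
        omega
    · exact fun K hK => hH (fun v hv => (hK hv).1.1)

def F (μ : ℕ) : ℕ → ℕ
  | 0 => 0
  | ω + 1 => (((μ + 1) * μ + 2) * (M μ (ω + 2) * F μ ω + 2)) ^ μ

lemma main_col [PartialOrder V] [Fintype V] {G : SimpleGraph V} {μ : ℕ} (hG : Hyp G μ) (ω : ℕ) :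
    ∀ S : Set V, G.CliqueFreeOn S (ω + 1) → Col G S (F μ ω) := by
  induction ω with
  | zero =>
    intro S hS
    have : ∀ v, v ∉ S := fun v hv => hS (t := {v}) (by simpa using hv) (by simp)
    exact ⟨fun _ => 0, fun v hv => absurd hv (this v), fun v hv => absurd hv (this v)⟩
  | succ ω ih =>
    intro S hS
    exact tower_col hG ih μ 0 S hS (by omega) trivial


lemma tree_order {ι : Type} {T : SimpleGraph ι} (hT : T.IsTree) (r : ι) :
    ∃ (P : ∀ y, T.Walk r y), (∀ y, (P y).IsPath) ∧ (∀ y (Q : T.Walk r y), Q.IsPath → Q = P y) := by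
  have h := fun y => hT.existsUnique_path r y
  choose P hP hP' using h
  exact ⟨P, hP, fun y Q hQ => hP' y Q hQ⟩

lemma exists_hyp [Fintype V] {G : SimpleGraph V} {μ : ℕ} (td : TreeDecomp G) (hmu : td.MuLE μ) :
    ∃ _ : PartialOrder V, Hyp G μ := by
  obtain ⟨r⟩ : Nonempty td.ι := td.isTree.1.nonempty
  obtain ⟨P, hP, hPu⟩ := tree_order td.isTree r
  have htake : ∀ y z (h : z ∈ (P y).support), (P y).takeUntil z h = P z := fun y z h =>
    hPu z _ ((hP y).takeUntil h)
  have hlen : ∀ z y, z ∈ (P y).support → z ≠ y → (P z).length < (P y).length := by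
    intro z y h hne
    rw [← htake y z h]
    exact Walk.length_takeUntil_lt_length h hne
  let ord : PartialOrder td.ι :=
    { le := fun z y => z ∈ (P y).support
      le_refl := fun z => (P z).end_mem_support
      le_trans := by
        intro a b c hab hbc
        have hab' : a ∈ (P b).support := hab
        rw [← htake c b hbc] at hab'
        exact (P c).support_takeUntil_subset_support hbc hab'
      le_antisymm := by
        intro a b hab hba
        by_contra hne
        have h1 := hlen a b hab hne
        have h2 := hlen b a hba (Ne.symm hne)
        omega }
  have hle : ∀ z y : td.ι, z ≤ y ↔ z ∈ (P y).support := fun _ _ => Iff.rfl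
  have hchain : ∀ u v w : td.ι, u ≤ w → v ≤ w → u ≤ v ∨ v ≤ u := by
    have key : ∀ (w : td.ι) (i j : ℕ), i ≤ j → (P w).getVert i ≤ (P w).getVert j := by
      intro w i j hij
      rw [hle, ← hPu _ _ ((hP w).take j)]
      have : ((P w).take j).getVert i = (P w).getVert i := by
        rw [Walk.take_getVert, min_eq_right hij]
      rw [← this]
      exact Walk.getVert_mem_support _ _
    intro u v w hu hv
    obtain ⟨i, rfl, -⟩ := Walk.mem_support_iff_exists_getVert.1 ((hle _ _).1 hu)
    obtain ⟨j, rfl, -⟩ := Walk.mem_support_iff_exists_getVert.1 ((hle _ _).1 hv)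
    rcases le_total i j with h | h
    · exact Or.inl (key w i j h)
    · exact Or.inr (key w j i h)
  have htop : ∀ u : V, ∃ t : td.ι, ∀ y, u ∈ td.bag y →
      t ≤ y ∧ ∀ z, t ≤ z → z ≤ y → u ∈ td.bag z := by
    intro u
    have hex : ∃ n, ∃ x, u ∈ td.bag x ∧ (P x).length = n := by
      obtain ⟨x, hx⟩ := td.mem_bag u
      exact ⟨_, x, hx, rfl⟩
    obtain ⟨t, ht, htl⟩ := Nat.find_spec hex
    have hmin : ∀ x, u ∈ td.bag x → (P t).length ≤ (P x).length := by
      intro x hx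
      rw [htl]
      exact Nat.find_min' hex ⟨x, hx, rfl⟩
    refine ⟨t, fun y hy => ?_⟩
    obtain ⟨Q0⟩ := (td.bag_conn u).preconnected ⟨t, ht⟩ ⟨y, hy⟩
    let Q1 : td.T.Walk t y := Q0.map (Embedding.induce {x : td.ι | u ∈ td.bag x}).toHom
    have hQ1 : ∀ z ∈ Q1.support, u ∈ td.bag z := by
      intro z hz
      have hs : Q1.support =
          Q0.support.map (Embedding.induce (G := td.T) {x : td.ι | u ∈ td.bag x}).toHom :=
        Walk.support_map _ _
      rw [hs, List.mem_map] at hz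
      obtain ⟨z', -, rfl⟩ := hz
      exact z'.2
    let Q := Q1.bypass
    have hQ : ∀ z ∈ Q.support, u ∈ td.bag z := fun z hz =>
      hQ1 z (Q1.support_bypass_subset_support hz)
    have hQp : Q.IsPath := Q1.bypass_isPath
    have happ : ((P t).append Q).IsPath := by
      rw [Walk.isPath_def, Walk.support_append, List.nodup_append']
      have hQn : Q.support.Nodup := hQp.support_nodup
      rw [← Walk.cons_tail_support] at hQn
      refine ⟨(hP t).support_nodup, (List.nodup_cons.1 hQn).2, ?_⟩
      intro z hz hz'
      have h1 : u ∈ td.bag z := hQ z (List.mem_of_mem_tail hz')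
      by_cases hzt : z = t
      · subst hzt
        exact (List.nodup_cons.1 hQn).1 hz'
      · have := hlen z t hz hzt
        have := hmin z h1
        omega
    have hPy := hPu y _ happ
    have hty : t ≤ y := by
      rw [hle, ← hPy, Walk.mem_support_append_iff]
      exact Or.inl (P t).end_mem_support
    refine ⟨hty, fun z hz hzy => ?_⟩
    rw [hle, ← hPy, Walk.mem_support_append_iff] at hzy
    rcases hzy with h | h
    · have : z = t := le_antisymm ((hle _ _).2 h) hz
      rw [this]; exact ht
    · exact hQ z h
  choose t ht using htop
  let e := Fintype.equivFin V
  let φ : V → td.ι ×ₗ Fin (Fintype.card V) := fun v => toLex (t v, e v)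
  have hφ : Function.Injective φ := by
    intro u v h
    have : (t u, e u) = (t v, e v) := toLex.injective h
    exact e.injective (Prod.ext_iff.1 this).2
  let ordV : PartialOrder V := PartialOrder.lift φ hφ
  have hleV : ∀ u v : V, u ≤ v ↔ t u < t v ∨ t u = t v ∧ e u ≤ e v := fun u v =>
    Prod.Lex.le_iff
  have hleV' : ∀ u v : V, u ≤ v → t u ≤ t v := by
    intro u v h
    rcases (hleV u v).1 h with h | h
    · exact h.le
    · exact h.1.le
  have hcomp : ∀ u v : V, t u ≤ t v ∨ t v ≤ t u → u ≤ v ∨ v ≤ u := by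
    intro u v h
    rw [hleV, hleV]
    by_cases he : t u = t v
    · rcases le_total (e u) (e v) with h' | h'
      · exact Or.inl (Or.inr ⟨he, h'⟩)
      · exact Or.inr (Or.inr ⟨he.symm, h'⟩)
    · rcases h with h | h
      · exact Or.inl (Or.inl (lt_of_le_of_ne h he))
      · exact Or.inr (Or.inl (lt_of_le_of_ne h (Ne.symm he)))
  have hin : ∀ u x : V, (u ≤ x ∧ ∃ w, x ≤ w ∧ G.Adj u w) → u ∈ td.bag (t x) := by
    rintro u x ⟨hux, w, hxw, hadj⟩
    obtain ⟨y, hy1, hy2⟩ := td.edge_bag hadj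
    exact (ht u y hy1).2 (t x) (hleV' _ _ hux) ((hleV' _ _ hxw).trans (ht w y hy2).1)
  refine ⟨ordV, ⟨?_, ?_, ?_⟩⟩
  · intro u v w hu hv
    exact hcomp u v (hchain _ _ _ (hleV' _ _ hu) (hleV' _ _ hv))
  · intro u v hadj
    obtain ⟨y, hy1, hy2⟩ := td.edge_bag hadj
    exact hcomp u v (hchain _ _ _ (ht u y hy1).1 (ht v y hy2).1)
  · intro x n a b hab h
    exact hmu (t x) n a b hab (fun i => (h i).imp (hin _ _) (hin _ _))

def trivTD (G : SimpleGraph V) : TreeDecomp G where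
  ι := Unit
  fintype_ι := inferInstance
  T := ⊥
  isTree := IsTree.of_subsingleton
  bag := fun _ => Set.univ
  mem_bag := fun _ => ⟨(), trivial⟩
  edge_bag := fun _ _ _ => ⟨(), trivial, trivial⟩
  bag_conn := fun v => by
    have : Nonempty {x : Unit | v ∈ (Set.univ : Set V)} := ⟨⟨(), trivial⟩⟩
    exact ⟨fun a b => by rw [Subsingleton.elim a b]⟩

lemma exists_td [Fintype V] (G : SimpleGraph V) : ∃ n, ∃ td : TreeDecomp G, td.MuLE n := by
  refine ⟨Fintype.card V, trivTD G, ?_⟩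
  intro x n a b hab _
  have : Function.Injective a := by
    intro i j h
    by_contra hne
    exact (hab.2 i j hne).1 h
  simpa using Fintype.card_le_of_injective a this

end TMu

/-- There is a function `f : ℕ × ℕ → ℕ` such that every finite graph with induced matching
treewidth at most `μ` and clique number at most `ω` has chromatic number at most `f (μ, ω)`. -/
theorem stmt1 :
    ∃ f : ℕ × ℕ → ℕ, ∀ (μ ω : ℕ) (V : Type) [Fintype V] (G : SimpleGraph V),
      treeMu G ≤ μ → G.CliqueFree (ω + 1) →
      G.chromaticNumber ≤ (f (μ, ω) : ℕ∞) := by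
  refine ⟨fun p => TMu.F p.1 p.2, ?_⟩
  intro μ ω V _ G hμ hω
  have hmem : ∃ td : TreeDecomp G, td.MuLE (treeMu G) := Nat.sInf_mem (TMu.exists_td G)
  obtain ⟨td, htd⟩ := hmem
  have htd' : td.MuLE μ := fun x n a b h1 h2 => (htd x n a b h1 h2).trans hμ
  obtain ⟨ord, hG⟩ := TMu.exists_hyp td htd'
  obtain ⟨c, h1, h2⟩ := TMu.main_col hG ω Set.univ (fun K _ hK => hω K hK)
  apply SimpleGraph.Colorable.chromaticNumber_le
  exact ⟨SimpleGraph.Coloring.mk (fun v => (⟨c v, h1 v trivial⟩ : Fin (TMu.F μ ω)))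
    (fun {u v} huv he => h2 u trivial v trivial huv (Fin.mk.inj_iff.1 he))⟩
end

section
/- For all positive integers s and t, there exists an integer M(s,t) (one may take M(s,t) = R(2t, 2t, s+1)) such that the following holds: every finite bipartite graph that contains a matching of size M(s,t) contains either an induced subgraph isomorphic to K_{t,t} or an induced matching of size s+1. -/
open SimpleGraph

/-- `n` is large enough for the multicolour Ramsey property with target sizes `t`:
every `k`-colouring of the edges of the complete graph on `n` vertices admits, for some
colour `i`, a set of `t i` vertices all of whose connecting edges have colour `i`. -/
def RamseyProp (n : ℕ) {k : ℕ} (t : Fin k → ℕ) : Prop :=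
  ∀ c : Sym2 (Fin n) → Fin k, ∃ (i : Fin k) (m : Finset (Fin n)),
    m.card = t i ∧ ∀ x ∈ m, ∀ y ∈ m, x ≠ y → c s(x, y) = i

/-- The three-colour Ramsey number `R(t₁, t₂, t₃)`. -/
noncomputable def ramsey3 (t₁ t₂ t₃ : ℕ) : ℕ := sInf {n | RamseyProp n ![t₁, t₂, t₃]}

theorem ramsey_aux {k : ℕ} : ∀ (N : ℕ) (t : Fin k → ℕ), ∑ i, t i = N →
    ∃ n : ℕ, ∀ (α : Type) (c : Sym2 α → Fin k) (S : Finset α), n ≤ S.card →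
      ∃ (i : Fin k) (m : Finset α), m ⊆ S ∧ m.card = t i ∧
        ∀ x ∈ m, ∀ y ∈ m, x ≠ y → c s(x, y) = i := by
  classical
  intro N
  induction N with
  | zero =>
    intro t ht
    refine ⟨1, fun α c S hS => ?_⟩
    obtain ⟨v, hv⟩ := Finset.card_pos.1 hS
    refine ⟨c s(v, v), ∅, by simp, ?_, by simp⟩
    have := Finset.sum_eq_zero_iff.1 ht (c s(v, v)) (Finset.mem_univ _)
    simp [this]
  | succ N ih =>
    intro t ht
    by_cases h0 : ∃ i, t i = 0
    · obtain ⟨i, hi⟩ := h0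
      exact ⟨0, fun α c S hS => ⟨i, ∅, by simp, by simp [hi], by simp⟩⟩
    push Not at h0
    have key : ∀ j, ∑ i, Function.update t j (t j - 1) i = N := by
      intro j
      rw [Finset.sum_update_of_mem (Finset.mem_univ j)]
      have h1 := Finset.add_sum_erase Finset.univ t (Finset.mem_univ j)
      rw [Finset.erase_eq] at h1
      have := h0 j
      omega
    choose n hn using fun j => ih _ (key j)
    refine ⟨2 + ∑ j, n j, fun α c S hS => ?_⟩
    obtain ⟨v, hv⟩ := Finset.card_pos.1 (show 0 < S.card by omega)
    have hj : ∃ j, n j ≤ ((S.erase v).filter (fun x => c s(v, x) = j)).card := by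
      by_contra! hlt
      have h1 : (S.erase v).card
          = ∑ j, ((S.erase v).filter (fun x => c s(v, x) = j)).card :=
        Finset.card_eq_sum_card_fiberwise (fun x _ => Finset.mem_coe.2 (Finset.mem_univ _))
      have h2 : ∑ j, ((S.erase v).filter (fun x => c s(v, x) = j)).card ≤ ∑ j, n j :=
        Finset.sum_le_sum (fun j _ => (hlt j).le)
      rw [Finset.card_erase_of_mem hv] at h1
      omega
    obtain ⟨j, hj⟩ := hj
    obtain ⟨i, m, hm, hc, hcol⟩ := hn j α c _ hj
    have hmS : m ⊆ S := fun x hx => Finset.mem_of_mem_erase (Finset.mem_filter.1 (hm hx)).1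
    by_cases hij : i = j
    · subst hij
      have hvm : v ∉ m := fun hx =>
        (Finset.mem_erase.1 (Finset.mem_filter.1 (hm hx)).1).1 rfl
      refine ⟨i, insert v m, ?_, ?_, ?_⟩
      · intro x hx
        rcases Finset.mem_insert.1 hx with rfl | hx
        · exact hv
        · exact hmS hx
      · rw [Finset.card_insert_of_notMem hvm, hc, Function.update_self]
        have := h0 i
        omega
      · intro x hx y hy hxy
        rcases Finset.mem_insert.1 hx with rfl | hx' <;>
          rcases Finset.mem_insert.1 hy with rfl | hy'
        · exact absurd rfl hxy
        · exact (Finset.mem_filter.1 (hm hy')).2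
        · rw [Sym2.eq_swap]; exact (Finset.mem_filter.1 (hm hx')).2
        · exact hcol x hx' y hy' hxy
    · refine ⟨i, m, hmS, ?_, hcol⟩
      rw [hc, Function.update_of_ne hij]

theorem ramsey3_prop (t₁ t₂ t₃ : ℕ) : RamseyProp (ramsey3 t₁ t₂ t₃) ![t₁, t₂, t₃] := by
  have : {n | RamseyProp n ![t₁, t₂, t₃]}.Nonempty := by
    obtain ⟨n, hn⟩ := ramsey_aux _ ![t₁, t₂, t₃] rfl
    refine ⟨n, fun c => ?_⟩
    obtain ⟨i, m, _, h1, h2⟩ := hn (Fin n) c Finset.univ (by simp)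
    exact ⟨i, m, h1, h2⟩
  exact Nat.sInf_mem this

theorem ktt_of {V : Type} {G : SimpleGraph V} {A B : Set V} (hd : Disjoint A B)
    (hb : ∀ u v : V, G.Adj u v → (u ∈ A ∧ v ∈ B) ∨ (u ∈ B ∧ v ∈ A)) {t : ℕ}
    (f g : Fin t → V) (hf : Function.Injective f) (hg : Function.Injective g)
    (hfA : ∀ i, f i ∈ A) (hgB : ∀ i, g i ∈ B) (hadj : ∀ i j, G.Adj (f i) (g j)) :
    Nonempty (completeBipartiteGraph (Fin t) (Fin t) ↪g G) := by
  have hn : ∀ x, x ∈ A → x ∈ B → False := fun x h1 h2 => Set.disjoint_left.1 hd h1 h2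
  refine ⟨⟨⟨Sum.elim f g, hf.sumElim hg fun i j h => (hadj i j).ne h⟩, ?_⟩⟩
  rintro (i | i) (j | j)
  · simp only [Function.Embedding.coeFn_mk, Sum.elim_inl, completeBipartiteGraph_adj]
    simp only [Sum.isLeft_inl, Sum.isRight_inl]
    have := hb (f i) (f j)
    have := hn _ (hfA i)
    have := hn _ (hfA j)
    simp; tauto
  · simp [hadj]
  · simp [(hadj j i).symm]
  · simp only [Function.Embedding.coeFn_mk, Sum.elim_inr, completeBipartiteGraph_adj]
    have := hb (g i) (g j)
    have := fun h => hn _ h (hgB i)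
    have := fun h => hn _ h (hgB j)
    simp; tauto

theorem stmt3 (s t : ℕ) (hs : 0 < s) (ht : 0 < t) :
    ∃ M : ℕ, M = ramsey3 (2 * t) (2 * t) (s + 1) ∧
      ∀ (V : Type) [Fintype V] (G : SimpleGraph V) (A B : Set V),
        A ∪ B = Set.univ → Disjoint A B →
        (∀ u v : V, G.Adj u v → (u ∈ A ∧ v ∈ B) ∨ (u ∈ B ∧ v ∈ A)) →
        (∃ a b : Fin M → V, (∀ i, G.Adj (a i) (b i)) ∧
          ∀ i j : Fin M, i ≠ j → a i ≠ a j ∧ a i ≠ b j ∧ b i ≠ a j ∧ b i ≠ b j) →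
        Nonempty (completeBipartiteGraph (Fin t) (Fin t) ↪g G) ∨
        (∃ a b : Fin (s + 1) → V, IsIndMatching G a b) := by
  classical
  refine ⟨_, rfl, ?_⟩
  have hR := ramsey3_prop (2 * t) (2 * t) (s + 1)
  generalize ramsey3 (2 * t) (2 * t) (s + 1) = M at hR
  intro V _ G A B hAB hd hb ⟨a', b', hadj', hne'⟩
  have hn : ∀ x, x ∈ A → x ∈ B → False := fun x h1 h2 => Set.disjoint_left.1 hd h1 h2
  obtain ⟨a, b, haA, hbB, hadj, hne⟩ : ∃ a b : Fin M → V, (∀ i, a i ∈ A) ∧ (∀ i, b i ∈ B) ∧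
      (∀ i, G.Adj (a i) (b i)) ∧ ∀ i j : Fin M, i ≠ j → a i ≠ a j ∧ b i ≠ b j := by
    have hch : ∀ i, ∃ p : V × V, p.1 ∈ A ∧ p.2 ∈ B ∧ G.Adj p.1 p.2 ∧
        (p = (a' i, b' i) ∨ p = (b' i, a' i)) := by
      intro i
      rcases hb _ _ (hadj' i) with h | h
      · exact ⟨(a' i, b' i), h.1, h.2, hadj' i, Or.inl rfl⟩
      · exact ⟨(b' i, a' i), h.2, h.1, (hadj' i).symm, Or.inr rfl⟩
    choose p h1 h2 h3 h4 using hch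
    refine ⟨fun i => (p i).1, fun i => (p i).2, h1, h2, h3, fun i j hij => ?_⟩
    have := hne' i j hij
    rcases h4 i with h | h <;> rcases h4 j with h' | h' <;> simp only [h, h'] <;> tauto
  have ha : Function.Injective a := fun i j h => by
    by_contra hij; exact (hne i j hij).1 h
  have hbi : Function.Injective b := fun i j h => by
    by_contra hij; exact (hne i j hij).2 h
  let f : Fin M → Fin M → Fin 3 := fun i j =>
    if G.Adj (a i) (b j) then 0 else if G.Adj (a j) (b i) then 1 else 2
  have hf0 : ∀ i j, f i j = 0 → G.Adj (a i) (b j) := by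
    intro i j h
    by_contra h1
    by_cases h2 : G.Adj (a j) (b i) <;> simp [f, h1, h2] at h
  have hf1 : ∀ i j, f i j = 1 → G.Adj (a j) (b i) := by
    intro i j h
    by_contra h2
    by_cases h1 : G.Adj (a i) (b j) <;> simp [f, h1, h2] at h
  have hf2 : ∀ i j, f i j = 2 → ¬ G.Adj (a i) (b j) ∧ ¬ G.Adj (a j) (b i) := by
    intro i j h
    by_cases h1 : G.Adj (a i) (b j) <;> by_cases h2 : G.Adj (a j) (b i) <;>
      simp [f, h1, h2] at h ⊢
  have hab : ∀ i j, a i ≠ b j := fun i j h => hn (a i) (haA i) (by rw [h]; exact hbB j)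
  obtain ⟨i, m, hm, hc⟩ := hR (fun e => f e.inf e.sup)
  have hc' : ∀ x ∈ m, ∀ y ∈ m, x < y → f x y = i := by
    intro x hx y hy hxy
    have := hc x hx y hy hxy.ne
    simpa [Sym2.inf_mk, Sym2.sup_mk, inf_eq_left.2 hxy.le, sup_eq_right.2 hxy.le] using this
  let e := m.orderEmbOfFin hm
  have hem : ∀ k, e k ∈ m := fun k => m.orderEmbOfFin_mem hm k
  have hlt : ∀ k l, k < l → f (e k) (e l) = i := fun k l h =>
    hc' _ (hem k) _ (hem l) (e.strictMono h)
  clear_value e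
  match i, hm, e, hem, hlt with
  | 0, hm, e, hem, hlt =>
    left
    change Fin (2 * t) ↪o Fin M at e
    refine ktt_of hd hb (fun k => a (e ⟨k, by omega⟩)) (fun k => b (e ⟨t + k, by omega⟩))
      (fun k l h => ?_) (fun k l h => ?_) (fun _ => haA _) (fun _ => hbB _) (fun k l => ?_)
    · have := e.injective (ha h); simp at this; omega
    · have := e.injective (hbi h); simp at this; omega
    · have := hlt ⟨k, by show _ < 2 * t; omega⟩ ⟨t + l, by show _ < 2 * t; omega⟩
        (by show k.1 < t + l.1; omega)
      exact hf0 _ _ this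
  | 1, hm, e, hem, hlt =>
    left
    change Fin (2 * t) ↪o Fin M at e
    refine ktt_of hd hb (fun k => a (e ⟨t + k, by omega⟩)) (fun k => b (e ⟨k, by omega⟩))
      (fun k l h => ?_) (fun k l h => ?_) (fun _ => haA _) (fun _ => hbB _) (fun k l => ?_)
    · have := e.injective (ha h); simp at this; omega
    · have := e.injective (hbi h); simp at this; omega
    · have := hlt ⟨l, by show _ < 2 * t; omega⟩ ⟨t + k, by show _ < 2 * t; omega⟩
        (by show l.1 < t + k.1; omega)
      exact hf1 _ _ this
  | 2, hm, e, hem, hlt =>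
    right
    change Fin (s + 1) ↪o Fin M at e
    have hno : ∀ k l : Fin (s + 1), k < l →
        ¬ G.Adj (a (e k)) (b (e l)) ∧ ¬ G.Adj (a (e l)) (b (e k)) := by
      intro k l hkl
      exact hf2 _ _ (hlt k l hkl)
    have hno' : ∀ k l : Fin (s + 1), k ≠ l → ¬ G.Adj (a (e k)) (b (e l)) := by
      intro k l hkl
      rcases lt_or_gt_of_ne hkl with h | h
      · exact (hno k l h).1
      · exact (hno l k h).2
    refine ⟨fun k => a (e k), fun k => b (e k), fun k => hadj _, fun k l hkl => ?_⟩
    have hekl : e k ≠ e l := fun h => hkl (e.injective h)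
    refine ⟨(hne _ _ hekl).1, hab _ _, (hab _ _).symm,
      (hne _ _ hekl).2, fun h => ?_, hno' k l hkl, fun h => hno' l k hkl.symm h.symm, fun h => ?_⟩
    · rcases hb _ _ h with h | h
      · exact hn _ (haA _) h.2
      · exact hn _ (haA _) h.1
    · rcases hb _ _ h with h | h
      · exact hn _ h.1 (hbB _)
      · exact hn _ h.2 (hbB _)
end

section
/- For all positive integers s, t, and m, there exists an integer N(s,t,m) such that the following holds: if G is a finite simple K_{t,t}-free graph and I_1, …, I_m are independent sets in G, each of size at least N(s,t,m), then there exists an independent set I in G such that |I ∩ I_i| ≥ s for all i ∈ [m]. -/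
open SimpleGraph

lemma pair_aux {V : Type} (G : SimpleGraph V) (s t : ℕ)
    (hG : IsEmpty (completeBipartiteGraph (Fin t) (Fin t) ↪g G)) (A B : Finset V)
    (hA : (A : Set V).Pairwise fun u v => ¬ G.Adj u v)
    (hB : (B : Set V).Pairwise fun u v => ¬ G.Adj u v)
    (cA : s + t ≤ A.card) (cB : 2 ^ (s + t) * (s + t) ≤ B.card) :
    ∃ A' ⊆ A, ∃ B' ⊆ B, s ≤ A'.card ∧ s ≤ B'.card ∧ ∀ a ∈ A', ∀ b ∈ B', ¬ G.Adj a b := by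
  classical
  obtain ⟨A0, hA0, cA0⟩ := Finset.exists_subset_card_eq cA
  obtain ⟨S, hS, hSc⟩ := Finset.exists_le_card_fiber_of_mul_le_card_of_maps_to
    (s := B) (t := A0.powerset) (f := fun b => A0.filter (fun a => G.Adj a b)) (n := s + t)
    (fun b _ => Finset.mem_powerset.2 (Finset.filter_subset _ _))
    ⟨∅, Finset.empty_mem_powerset _⟩ (by rw [Finset.card_powerset, cA0]; exact cB)
  set B' := B.filter (fun b => A0.filter (fun a => G.Adj a b) = S) with hB'
  have hSA : S ⊆ A0 := Finset.mem_powerset.1 hS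
  have key : ∀ b ∈ B', ∀ a ∈ A0, (G.Adj a b ↔ a ∈ S) := by
    intro b hb a ha
    have := (Finset.mem_filter.1 hb).2
    rw [← this]; simp [ha]
  have hB'B : B' ⊆ B := Finset.filter_subset _ _
  by_cases hc : t ≤ S.card
  · exfalso
    obtain ⟨f⟩ : Nonempty (Fin t ↪ S) := Function.Embedding.nonempty_of_card_le (by simpa using hc)
    obtain ⟨g⟩ : Nonempty (Fin t ↪ B') :=
      Function.Embedding.nonempty_of_card_le (by simpa using (le_trans (by omega) hSc))
    have hfg : ∀ i j, G.Adj (f i : V) (g j : V) := fun i j =>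
      (key _ (g j).2 _ (hSA (f i).2)).2 (f i).2
    have hff : ∀ i j, ¬ G.Adj (f i : V) (f j : V) := by
      intro i j h
      exact hA (hA0 (hSA (f i).2)) (hA0 (hSA (f j).2)) h.ne h
    have hgg : ∀ i j, ¬ G.Adj (g i : V) (g j : V) := by
      intro i j h
      exact hB (hB'B (g i).2) (hB'B (g j).2) h.ne h
    refine hG.false ⟨⟨Sum.elim (fun i => (f i : V)) (fun i => (g i : V)), ?_⟩, ?_⟩
    · rintro (i | i) (j | j) h
      · simpa [Subtype.ext_iff] using h
      · exact absurd h (hfg i j).ne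
      · exact absurd h (hfg j i).ne'
      · simpa [Subtype.ext_iff] using h
    · rintro (i | i) (j | j)
      · exact iff_of_false (hff i j) (by simp)
      · exact iff_of_true (hfg i j) (by simp)
      · exact iff_of_true (hfg j i).symm (by simp)
      · exact iff_of_false (hgg i j) (by simp)
  · refine ⟨A0 \ S, Finset.sdiff_subset.trans hA0, B', hB'B, ?_, by omega, ?_⟩
    · rw [Finset.card_sdiff_of_subset hSA]; omega
    · intro a ha b hb h
      rw [Finset.mem_sdiff] at ha
      exact ha.2 ((key b hb a ha.1).1 h)

lemma multi_aux (t m : ℕ) (P : Finset (Fin m × Fin m)) : ∀ s : ℕ,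
    ∃ N : ℕ, ∀ (V : Type) (G : SimpleGraph V),
      IsEmpty (completeBipartiteGraph (Fin t) (Fin t) ↪g G) →
      ∀ I : Fin m → Finset V,
        (∀ i, ((I i : Set V)).Pairwise fun u v => ¬ G.Adj u v) →
        (∀ i, N ≤ (I i).card) →
        ∃ I' : Fin m → Finset V, (∀ i, I' i ⊆ I i) ∧ (∀ i, s ≤ (I' i).card) ∧
          ∀ p ∈ P, ∀ a ∈ I' p.1, ∀ b ∈ I' p.2, ¬ G.Adj a b := by
  classical
  induction P using Finset.induction_on with
  | empty =>
    intro s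
    exact ⟨s, fun V G _ I _ h => ⟨I, fun i => subset_rfl, h, by simp⟩⟩
  | insert q P hq ih =>
    intro s
    obtain ⟨N, hN⟩ := ih (2 ^ (s + t) * (s + t))
    refine ⟨N, fun V G hG I hI hc => ?_⟩
    obtain ⟨I1, h1, c1, e1⟩ := hN V G hG I hI hc
    have hI1 : ∀ i, ((I1 i : Set V)).Pairwise fun u v => ¬ G.Adj u v := fun i =>
      (hI i).mono (Finset.coe_subset.2 (h1 i))
    have hle : s + t ≤ 2 ^ (s + t) * (s + t) := Nat.le_mul_of_pos_left _ (by positivity)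
    obtain ⟨i, j⟩ := q
    obtain ⟨A, hA, B, hB, cA, cB, e⟩ := pair_aux G s t hG (I1 i) (I1 j) (hI1 i) (hI1 j)
      (hle.trans (c1 i)) (c1 j)
    by_cases hij : i = j
    · subst hij
      refine ⟨I1, h1, fun k => by have := c1 k; omega, ?_⟩
      intro p hp a ha b hb h
      rcases Finset.mem_insert.1 hp with rfl | hp
      · exact hI1 i ha hb h.ne h
      · exact e1 p hp a ha b hb h
    · set I2 : Fin m → Finset V := fun k => if k = i then A else if k = j then B else I1 k with hI2
      have h2 : ∀ k, I2 k ⊆ I1 k := by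
        intro k; simp only [hI2]
        split_ifs with h h'
        · subst h; exact hA
        · subst h'; exact hB
        · exact subset_rfl
      refine ⟨I2, fun k => (h2 k).trans (h1 k), ?_, ?_⟩
      · intro k; simp only [hI2]
        split_ifs
        · exact cA
        · exact cB
        · have := c1 k; omega
      · intro p hp a ha b hb
        rcases Finset.mem_insert.1 hp with rfl | hp
        · refine e a ?_ b ?_
          · simpa [hI2] using ha
          · simpa [hI2, Ne.symm hij] using hb
        · exact e1 p hp a (h2 _ ha) b (h2 _ hb)

/-- For all positive `s`, `t`, `m` there exists `N` such that: if `G` is a finite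
`K_{t,t}`-free graph and `I 1, …, I m` are independent sets each of size at least `N`,
then there is an independent set `J` with `|J ∩ I i| ≥ s` for all `i`. -/
theorem stmt4 (s t m : ℕ) (hs : 0 < s) (ht : 0 < t) (hm : 0 < m) :
    ∃ N : ℕ, ∀ (V : Type) [Fintype V] (G : SimpleGraph V),
      IsEmpty (completeBipartiteGraph (Fin t) (Fin t) ↪g G) →
      ∀ I : Fin m → Finset V,
        (∀ i, ((I i : Set V)).Pairwise fun u v => ¬ G.Adj u v) →
        (∀ i, N ≤ (I i).card) →
        ∃ J : Finset V, ((J : Set V)).Pairwise (fun u v => ¬ G.Adj u v) ∧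
          ∀ i, s ≤ ((J : Set V) ∩ (I i : Set V)).ncard := by
  classical
  obtain ⟨N, hN⟩ := multi_aux t m Finset.univ s
  refine ⟨N, fun V _ G hG I hI hc => ?_⟩
  obtain ⟨I', h1, c1, e⟩ := hN V G hG I hI hc
  refine ⟨Finset.univ.biUnion I', ?_, fun i => ?_⟩
  · intro a ha b hb _
    simp only [Finset.coe_biUnion, Set.mem_iUnion, Finset.mem_coe] at ha hb
    obtain ⟨i, _, ha⟩ := ha
    obtain ⟨j, _, hb⟩ := hb
    exact e (i, j) (Finset.mem_univ _) a ha b hb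
  · rw [← Finset.coe_inter, Set.ncard_coe_finset]
    exact (c1 i).trans (Finset.card_le_card (Finset.subset_inter
      (Finset.subset_biUnion_of_mem I' (Finset.mem_univ i)) (h1 i)))
end

section
/- Let μ and c be positive integers, let G be a finite simple graph, let (T, β) be a tree decomposition of G with μ(T, β) ≤ μ, let x be a node of T, and let S' be an independent set of G with S' ⊆ β(x) such that every vertex v ∈ S' satisfies α(G[N(v)]) < c. Then α(G[N(S')]) < μ · c, where N(S') = (⋃_{v ∈ S'} N[v]) \ S'. -/
open SimpleGraph

/-- The closed neighbourhood `N[v]`. -/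
def closedNbhd {V : Type} (G : SimpleGraph V) (v : V) : Set V := insert v (G.neighborSet v)

/-- The (open) neighbourhood of a set, `N(X) = (⋃ v ∈ X, N[v]) \ X`. -/
def extNbhd {V : Type} (G : SimpleGraph V) (X : Set V) : Set V :=
  (⋃ v ∈ X, closedNbhd G v) \ X

/-- Let `(T, β)` be a tree decomposition of a finite graph `G` with `μ(T,β) ≤ μ`, let `x`
be a node, and let `S' ⊆ β(x)` be an independent set all of whose vertices `v` satisfy
`α(G[N(v)]) < c`. Then `α(G[N(S')]) < μ · c`. -/
theorem stmt7 (μ c : ℕ) (hμ : 0 < μ) (hc : 0 < c) (V : Type) [Fintype V]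
    (G : SimpleGraph V) (td : TreeDecomp G) (htd : td.MuLE μ) (x : td.ι)
    (S' : Set V) (hS'sub : S' ⊆ td.bag x)
    (hS'ind : S'.Pairwise fun u v => ¬ G.Adj u v)
    (hlight : ∀ v ∈ S', ∀ I : Finset V, ↑I ⊆ G.neighborSet v →
      ((I : Set V)).Pairwise (fun u w => ¬ G.Adj u w) → I.card < c) :
    ∀ I : Finset V, ↑I ⊆ extNbhd G S' →
      ((I : Set V)).Pairwise (fun u w => ¬ G.Adj u w) → I.card < μ * c := by
  classical
  intro I hI hIind
  have hdom : ∀ w ∈ I, ∃ v ∈ S', G.Adj v w := by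
    intro w hw
    obtain ⟨h1, h2⟩ := hI hw
    simp only [Set.mem_iUnion, closedNbhd] at h1
    obtain ⟨v, hv, h⟩ := h1
    rcases h with h | h
    · exact absurd (h ▸ hv) h2
    · exact ⟨v, hv, h⟩
  let P : Finset V → Prop := fun A => ↑A ⊆ S' ∧ ∀ w ∈ I, ∃ v ∈ A, G.Adj v w
  have hex : ∃ A, P A := by
    refine ⟨Finset.univ.filter (· ∈ S'), ?_, ?_⟩
    · intro v hv; simpa using hv
    · intro w hw
      obtain ⟨v, hv, h⟩ := hdom w hw
      exact ⟨v, by simpa using hv, h⟩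
  obtain ⟨A, hA⟩ := exists_minimal_of_wellFoundedLT P hex
  obtain ⟨hAS, hAd⟩ := hA.prop
  have hpriv : ∀ a ∈ A, ∃ w ∈ I, G.Adj a w ∧ ∀ v ∈ A, G.Adj v w → v = a := by
    intro a ha
    by_contra hcon
    push Not at hcon
    have hP : P (A.erase a) := by
      refine ⟨fun v hv => hAS (Finset.mem_of_mem_erase hv), fun w hw => ?_⟩
      obtain ⟨v, hv, h⟩ := hAd w hw
      by_cases hva : v = a
      · subst hva
        obtain ⟨u, hu, huw, hne⟩ := hcon w hw h
        exact ⟨u, Finset.mem_erase.2 ⟨hne, hu⟩, huw⟩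
      · exact ⟨v, Finset.mem_erase.2 ⟨hva, hv⟩, h⟩
    have := hA.le_of_le hP (Finset.erase_subset a A)
    exact Finset.notMem_erase a A (this ha)
  choose! b hbI hab hbu using hpriv
  have hcard : A.card ≤ μ := by
    let e := A.equivFin.symm
    refine htd x A.card (fun i => (e i : V)) (fun i => b (e i)) ⟨fun i => hab _ (e i).2, ?_⟩
      fun i => Or.inl (hS'sub (hAS (e i).2))
    intro i j hij
    have hne : (e i : V) ≠ e j := fun h => hij (e.injective (Subtype.ext h))
    have hi := (e i).2
    have hj := (e j).2
    have hbne : b (e i) ≠ b (e j) := fun h =>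
      hne (hbu _ hj _ hi (h ▸ hab _ hi))
    have hnS : ∀ w ∈ I, ∀ v ∈ A, v ≠ w := fun w hw v hv h => (hI hw).2 (h ▸ hAS hv)
    exact ⟨hne, hnS _ (hbI _ hj) _ hi, (hnS _ (hbI _ hi) _ hj).symm, hbne,
      hS'ind (hAS hi) (hAS hj) hne, fun h => hne (hbu _ hj _ hi h),
      fun h => hne (hbu _ hi _ hj h.symm).symm, hIind (hbI _ hi) (hbI _ hj) hbne⟩
  have hsub : I ⊆ A.biUnion (fun a => I.filter (G.Adj a)) := by
    intro w hw
    obtain ⟨v, hv, h⟩ := hAd w hw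
    exact Finset.mem_biUnion.2 ⟨v, hv, Finset.mem_filter.2 ⟨hw, h⟩⟩
  have h1 : I.card ≤ A.card * (c - 1) := by
    refine (Finset.card_le_card hsub).trans (Finset.card_biUnion_le_card_mul _ _ _ ?_)
    intro a ha
    have := hlight a (hAS ha) (I.filter (G.Adj a)) (fun w hw => (Finset.mem_filter.1 hw).2)
      (hIind.mono (fun w hw => (Finset.mem_filter.1 hw).1))
    omega
  calc I.card ≤ A.card * (c - 1) := h1
    _ ≤ μ * (c - 1) := Nat.mul_le_mul_right _ hcard
    _ < μ * c := Nat.mul_lt_mul_of_pos_left (by omega) hμ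
end

section
/- For all positive integers μ and t, there exist integers m and c such that the following holds: if G is a finite simple K_{t,t}-free graph, (T, β) is a tree decomposition of G with μ(T, β) ≤ μ, x is a node of T, and S' ⊆ β(x) is an independent set of G with α(G[N(v)]) ≥ c for every v ∈ S', then |S'| < m. -/
open SimpleGraph

theorem rams_pre (κ : Type) [Fintype κ] (n : ℕ) : ∃ N : ℕ, ∀ (α : Type) (f : α → α → κ)
    (l : List α), N ≤ l.length → ∃ l' : List α, l'.Sublist l ∧ l'.length = n ∧
      ∃ c : α → κ, l.Nodup → l'.Pairwise (fun a b => f a b = c a) := by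
  classical
  induction n with
  | zero =>
    refine ⟨1, fun α f l hl => ⟨[], by simp, rfl, ?_⟩⟩
    cases l with
    | nil => simp at hl
    | cons a l => exact ⟨fun _ => f a a, by simp⟩
  | succ n ih =>
    obtain ⟨N, hN⟩ := ih
    refine ⟨Fintype.card κ * N + 1, fun α f l hl => ?_⟩
    cases l with
    | nil => simp at hl
    | cons a l =>
      have hl' : Fintype.card κ * N ≤ l.length := by simpa using hl
      have : ∃ k : κ, N ≤ (l.filter (fun b => f a b = k)).length := by
        by_contra! hcon
        have h1 : ∑ k : κ, (l.filter (fun b => f a b = k)).length = l.length := by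
          clear hl hl' hcon
          induction l with
          | nil => simp
          | cons b l ih =>
            have : ∀ k, ((b :: l).filter (fun b => f a b = k)).length
              = (l.filter (fun b => f a b = k)).length + if f a b = k then 1 else 0 := by
              intro k
              by_cases h : f a b = k <;> simp [h]
            simp only [this, Finset.sum_add_distrib, ih]
            simp
        have hne : (Finset.univ : Finset κ).Nonempty := ⟨f a a, Finset.mem_univ _⟩
        have h2 := Finset.sum_lt_sum_of_nonempty hne (fun k _ => hcon k)
        rw [h1, Finset.sum_const, Finset.card_univ, smul_eq_mul] at h2
        omega
      obtain ⟨k, hk⟩ := this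
      obtain ⟨l', hs, hlen, c, hc⟩ := hN α f _ hk
      refine ⟨a :: l', ?_, by simp [hlen], fun b => if b = a then k else c b, ?_⟩
      · exact (hs.trans List.filter_sublist).cons_cons a
      · intro hnd
        rw [List.nodup_cons] at hnd
        have hmem : ∀ b ∈ l', b ∈ l ∧ f a b = k := by
          intro b hb
          simpa using hs.subset hb
        rw [List.pairwise_cons]
        refine ⟨fun b hb => by simp [(hmem b hb).2], ?_⟩
        refine (hc (hnd.2.filter _)).imp_of_mem ?_
        intro b d hb _ h
        have : b ≠ a := by
          rintro rfl
          exact hnd.1 (hmem _ hb).1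
        simp [this, h]

theorem rams (κ : Type) [Fintype κ] (n : ℕ) : ∃ N : ℕ, ∀ (f : Fin N → Fin N → κ),
    0 < n → ∃ g : Fin n → Fin N, StrictMono g ∧ ∃ k, ∀ i j, i < j → f (g i) (g j) = k := by
  classical
  obtain ⟨N, hN⟩ := rams_pre κ (Fintype.card κ * n + 1)
  refine ⟨N, fun f hn => ?_⟩
  obtain ⟨l, hs, hlen, c, hc⟩ := hN (Fin N) f (List.finRange N) (by simp)
  have hc := hc (List.nodup_finRange N)
  have hlt : l.Pairwise (· < ·) := List.Pairwise.sublist hs (List.pairwise_lt_finRange N)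
  have hlt' : l.SortedLT := hlt.sortedLT
  have hnd : l.Nodup := hs.nodup (List.nodup_finRange N)
  obtain ⟨k, -, hk⟩ := Finset.exists_lt_card_fiber_of_mul_lt_card_of_maps_to
    (s := l.toFinset) (t := (Finset.univ : Finset κ)) (f := c) (n := n) (by simp)
    (by rw [List.toFinset_card_of_nodup hnd, hlen, Finset.card_univ]; omega)
  obtain ⟨s, hss, hsc⟩ := Finset.exists_subset_card_eq hk.le
  refine ⟨s.orderEmbOfFin hsc, (s.orderEmbOfFin hsc).strictMono, k, fun i j hij => ?_⟩
  have hi := hss (s.orderEmbOfFin_mem hsc i)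
  have hj := hss (s.orderEmbOfFin_mem hsc j)
  have hij' := (s.orderEmbOfFin hsc).strictMono hij
  simp only [Finset.mem_filter, List.mem_toFinset] at hi hj
  obtain ⟨p, hp, hpe⟩ := List.mem_iff_getElem.1 hi.1
  obtain ⟨q, hq, hqe⟩ := List.mem_iff_getElem.1 hj.1
  rw [List.pairwise_iff_getElem] at hc hlt
  have hpq : p < q := by
    rcases lt_trichotomy p q with h | h | h
    · exact h
    · subst h
      rw [← hpe, ← hqe] at hij'
      exact absurd hij' (lt_irrefl _)
    · have := hlt q p hq hp h
      rw [hpe, hqe] at this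
      exact absurd (this.trans hij') (lt_irrefl _)
  have := hc p q hp hq hpq
  rw [hpe, hqe] at this
  rw [this, hi.2]

theorem no_ktt {V : Type} {G : SimpleGraph V} {t : ℕ}
    (hG : IsEmpty (completeBipartiteGraph (Fin t) (Fin t) ↪g G)) (l r : Fin t → V)
    (hl : Function.Injective l) (hr : Function.Injective r)
    (hll : ∀ i j, ¬ G.Adj (l i) (l j)) (hrr : ∀ i j, ¬ G.Adj (r i) (r j))
    (hlr : ∀ i j, G.Adj (l i) (r j)) : False := by
  refine hG.false ⟨⟨Sum.elim l r, ?_⟩, ?_⟩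
  · rintro (i | i) (j | j) h
    · exact congrArg _ (hl h)
    · have := hlr i j
      simp only [Sum.elim_inl, Sum.elim_inr] at h
      rw [h] at this
      exact absurd this (by simp)
    · have := hlr j i
      simp only [Sum.elim_inl, Sum.elim_inr] at h
      rw [h] at this
      exact absurd this (by simp)
    · exact congrArg _ (hr h)
  · rintro (i | i) (j | j)
    · change G.Adj (l i) (l j) ↔ _
      simpa using hll i j
    · change G.Adj (l i) (r j) ↔ _
      simpa using hlr i j
    · change G.Adj (r i) (l j) ↔ _
      simpa using (hlr j i).symm
    · change G.Adj (r i) (r j) ↔ _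
      simpa using hrr i j

/-- For all positive `μ` and `t` there exist integers `m` and `c` such that: in any finite
`K_{t,t}`-free graph `G` with a tree decomposition `(T,β)` satisfying `μ(T,β) ≤ μ`, any
independent set `S' ⊆ β(x)` all of whose vertices `v` satisfy `α(G[N(v)]) ≥ c` has size
less than `m`. -/
theorem stmt8 (μ t : ℕ) (hμ : 0 < μ) (ht : 0 < t) :
    ∃ m c : ℕ, ∀ (V : Type) [Fintype V] (G : SimpleGraph V),
      IsEmpty (completeBipartiteGraph (Fin t) (Fin t) ↪g G) →
      ∀ td : TreeDecomp G, td.MuLE μ →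
        ∀ (x : td.ι) (S' : Finset V), ↑S' ⊆ td.bag x →
          ((S' : Set V)).Pairwise (fun u v => ¬ G.Adj u v) →
          (∀ v ∈ S', ∃ I : Finset V, ↑I ⊆ G.neighborSet v ∧
            ((I : Set V)).Pairwise (fun u w => ¬ G.Adj u w) ∧ c ≤ I.card) →
          S'.card < m := by
  classical
  obtain ⟨N, hN⟩ := rams Prop (2 * t + μ + 1)
  obtain ⟨c, hcdef⟩ : ∃ c, c = N + 2 * t := ⟨_, rfl⟩
  obtain ⟨m, hm⟩ := rams ((Fin c → Prop) × (Fin c → Prop) × (Fin c → Fin c → Prop)) (t + μ + 1)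
  refine ⟨m, c, ?_⟩
  intro V _ G hG td hmu x S hSx hS hI
  by_contra! hcard
  -- the vertices
  obtain ⟨ve⟩ : Nonempty (Fin m ↪ S) := by
    apply Function.Embedding.nonempty_of_card_le
    simpa using hcard
  have hw : ∀ i : Fin m, ∃ w : Fin c → V, Function.Injective w ∧
      (∀ a, G.Adj (ve i) (w a)) ∧ ∀ a b, ¬ G.Adj (w a) (w b) := by
    intro i
    obtain ⟨I, hIn, hIp, hIc⟩ := hI (ve i) (ve i).2
    obtain ⟨e⟩ : Nonempty (Fin c ↪ I) := by
      apply Function.Embedding.nonempty_of_card_le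
      simpa using hIc
    refine ⟨fun a => e a, fun a b h => e.injective (Subtype.ext h), fun a => hIn (e a).2, ?_⟩
    intro a b h
    exact hIp (e a).2 (e b).2 h.ne h
  choose w hwinj hvw hww using hw
  obtain ⟨g, hg, ⟨A, B, P⟩, hk⟩ := hm (fun i j => (fun a => G.Adj (ve i) (w j a),
    fun a => G.Adj (ve j) (w i a), fun a b => G.Adj (w i a) (w j b))) (by omega)
  obtain ⟨v, hv⟩ : ∃ v : Fin (t + μ + 1) → V, v = fun i => (ve (g i) : V) := ⟨_, rfl⟩
  obtain ⟨u, hu⟩ : ∃ u : Fin (t + μ + 1) → Fin c → V, u = fun i => w (g i) := ⟨_, rfl⟩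
  have hvinj : Function.Injective v := by
    intro i j h
    rw [hv] at h
    exact hg.injective (ve.injective (Subtype.ext h))
  have hvS : ∀ i, v i ∈ S := fun i => by rw [hv]; exact (ve (g i)).2
  have hvv : ∀ i j, ¬ G.Adj (v i) (v j) := fun i j h => hS (hvS i) (hvS j) h.ne h
  have huinj : ∀ i, Function.Injective (u i) := fun i => by rw [hu]; exact hwinj _
  have hvu : ∀ i a, G.Adj (v i) (u i a) := fun i a => by rw [hu, hv]; exact hvw _ _
  have huu : ∀ i a b, ¬ G.Adj (u i a) (u i b) := fun i a b => by rw [hu]; exact hww _ _ _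
  have hA : ∀ i j, i < j → ∀ a, G.Adj (v i) (u j a) ↔ A a := by
    intro i j hij a
    have := congrFun (congrArg (fun p => p.1) (hk i j hij)) a
    rw [hv, hu]; exact iff_of_eq this
  have hB : ∀ i j, i < j → ∀ a, G.Adj (v j) (u i a) ↔ B a := by
    intro i j hij a
    have := congrFun (congrArg (fun p => p.2.1) (hk i j hij)) a
    rw [hv, hu]; exact iff_of_eq this
  have hP : ∀ i j, i < j → ∀ a b, G.Adj (u i a) (u j b) ↔ P a b := by
    intro i j hij a b
    have := congrFun (congrFun (congrArg (fun p => p.2.2) (hk i j hij)) a) b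
    rw [hu]; exact iff_of_eq this
  clear hk hv hu
  have hAc : (Finset.univ.filter A).card < t := by
    by_contra! h
    obtain ⟨e⟩ : Nonempty (Fin t ↪ Finset.univ.filter A) := by
      apply Function.Embedding.nonempty_of_card_le
      rw [Fintype.card_fin, Fintype.card_coe]
      exact h
    have he : ∀ j, A (e j) := fun j => (Finset.mem_filter.1 (e j).2).2
    refine no_ktt hG (fun i => v ⟨i, by omega⟩) (fun j => u ⟨t, by omega⟩ (e j)) ?_ ?_ ?_ ?_ ?_
    · intro i j h
      simpa [Fin.ext_iff] using hvinj h
    · intro i j h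
      exact e.injective (Subtype.ext (huinj _ h))
    · intro i j; exact hvv _ _
    · intro i j; exact huu _ _ _
    · intro i j
      exact (hA _ _ (by simp [Fin.lt_def]) _).2 (he j)
  have hBc : (Finset.univ.filter B).card < t := by
    by_contra! h
    obtain ⟨e⟩ : Nonempty (Fin t ↪ Finset.univ.filter B) := by
      apply Function.Embedding.nonempty_of_card_le
      rw [Fintype.card_fin, Fintype.card_coe]
      exact h
    have he : ∀ j, B (e j) := fun j => (Finset.mem_filter.1 (e j).2).2
    refine no_ktt hG (fun i => v ⟨i + 1, by omega⟩) (fun j => u ⟨0, by omega⟩ (e j)) ?_ ?_ ?_ ?_ ?_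
    · intro i j h
      simpa [Fin.ext_iff] using hvinj h
    · intro i j h
      exact e.injective (Subtype.ext (huinj _ h))
    · intro i j; exact hvv _ _
    · intro i j; exact huu _ _ _
    · intro i j
      exact (hB _ _ (by simp [Fin.lt_def]) _).2 (he j)
  have hgood : N ≤ (Finset.univ \ (Finset.univ.filter A ∪ Finset.univ.filter B)).card := by
    have h1 := Finset.le_card_sdiff (Finset.univ.filter A ∪ Finset.univ.filter B)
      (Finset.univ : Finset (Fin c))
    have h2 := Finset.card_union_le (Finset.univ.filter A) (Finset.univ.filter B)
    rw [Finset.card_univ, Fintype.card_fin] at h1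
    omega
  obtain ⟨e⟩ : Nonempty (Fin N ↪
      (Finset.univ \ (Finset.univ.filter A ∪ Finset.univ.filter B) : Finset (Fin c))) := by
    apply Function.Embedding.nonempty_of_card_le
    rw [Fintype.card_fin, Fintype.card_coe]
    exact hgood
  have heg : ∀ j, ¬ A (e j) ∧ ¬ B (e j) := by
    intro j
    have := (e j).2
    simp only [Finset.mem_sdiff, Finset.mem_union, Finset.mem_filter, Finset.mem_univ,
      true_and, not_or] at this
    exact this
  obtain ⟨h, hh, k, hk⟩ := hN (fun a b => P (e a) (e b)) (by omega)
  obtain ⟨q, hq⟩ : ∃ q : Fin (2 * t + μ + 1) → Fin c, q = fun i => (e (h i) : Fin c) := ⟨_, rfl⟩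
  have hqinj : Function.Injective q := by
    intro i j h
    rw [hq] at h
    exact hh.injective (e.injective (Subtype.ext h))
  have hqA : ∀ i, ¬ A (q i) := fun i => by rw [hq]; exact (heg _).1
  have hqB : ∀ i, ¬ B (q i) := fun i => by rw [hq]; exact (heg _).2
  have hqP : ∀ i j, i < j → (P (q i) (q j) ↔ k) := fun i j hij => by
    rw [hq]; exact iff_of_eq (hk i j hij)
  clear hk hq
  by_cases hkk : k
  · refine no_ktt hG (fun i => u ⟨0, by omega⟩ (q ⟨i, by omega⟩))
      (fun j => u ⟨1, by omega⟩ (q ⟨t + j, by omega⟩)) ?_ ?_ ?_ ?_ ?_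
    · intro i j h
      simpa [Fin.ext_iff] using hqinj (huinj _ h)
    · intro i j h
      simpa [Fin.ext_iff] using hqinj (huinj _ h)
    · intro i j; exact huu _ _ _
    · intro i j; exact huu _ _ _
    · intro i j
      refine (hP _ _ (by simp [Fin.lt_def]) _ _).2 ((hqP _ _ ?_).2 hkk)
      simp only [Fin.lt_def]
      omega
  · obtain ⟨a, ha⟩ : ∃ a : Fin (μ + 1) → V, a = fun i : Fin (μ + 1) => v ⟨i, by omega⟩ := ⟨_, rfl⟩
    obtain ⟨b, hb⟩ : ∃ b : Fin (μ + 1) → V,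
      b = fun i : Fin (μ + 1) => u ⟨i, by omega⟩ (q ⟨i, by omega⟩) :=
      ⟨_, rfl⟩
    have hab : ∀ i, G.Adj (a i) (b i) := fun i => by rw [ha, hb]; exact hvu _ _
    have haa : ∀ i j, ¬ G.Adj (a i) (a j) := fun i j => by rw [ha]; exact hvv _ _
    have hnab : ∀ i j, i ≠ j → ¬ G.Adj (a i) (b j) := by
      intro i j hij
      rw [ha, hb]
      rcases lt_or_gt_of_ne hij with h | h
      · exact fun h' => hqA _ ((hA _ _ (by exact Fin.lt_def.1 h) _).1 h')
      · exact fun h' => hqB _ ((hB _ _ (by exact Fin.lt_def.1 h) _).1 h')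
    have hbb' : ∀ i j, i < j → ¬ G.Adj (b i) (b j) := by
      intro i j h
      rw [hb]
      exact fun h' => hkk ((hqP _ _ (by exact Fin.lt_def.1 h)).1
        ((hP _ _ (by exact Fin.lt_def.1 h) _ _).1 h'))
    have hbb : ∀ i j, i ≠ j → ¬ G.Adj (b i) (b j) := by
      intro i j hij
      rcases lt_or_gt_of_ne hij with h | h
      · exact hbb' _ _ h
      · exact fun h' => hbb' _ _ h h'.symm
    have hane : ∀ i j, a i ≠ b j := fun i j h => haa j i (h ▸ hab j)
    have hfin := hmu x (μ + 1) a b ⟨hab, fun i j hij => ⟨?_, hane i j, (hane j i).symm, ?_,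
      haa i j, hnab i j hij, fun h => hnab j i hij.symm h.symm, hbb i j hij⟩⟩
      (fun i => Or.inl (hSx (by rw [ha]; exact hvS _)))
    · omega
    · intro h
      rw [ha] at h
      exact hij (by simpa [Fin.ext_iff] using hvinj h)
    · intro h
      exact hnab i j hij (h ▸ hab i)
end

section
/- Let G be a finite simple graph, let (T, β) be a tree decomposition of G, and let L be an independent set of G. Then G admits a tree decomposition (T', β') in which every bag is either equal to N[s] for some s ∈ L, or equal to (β(x) \ L) ∪ N(β(x) ∩ L) for some node x of T. -/
open SimpleGraph

def pendAdj {ι L : Type} (T : SimpleGraph ι) (p : L → ι) : ι ⊕ L → ι ⊕ L → Prop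
  | .inl x, .inl y => T.Adj x y
  | .inl x, .inr s => x = p s
  | .inr s, .inl x => x = p s
  | .inr _, .inr _ => False

def pend {ι L : Type} (T : SimpleGraph ι) (p : L → ι) : SimpleGraph (ι ⊕ L) where
  Adj := pendAdj T p
  symm := ⟨by
    rintro (x | x) (y | y) h
    · exact T.adj_symm h
    · exact h
    · exact h
    · exact h⟩
  loopless := ⟨by
    rintro (x | x) h
    · exact T.irrefl h
    · exact h⟩

theorem pend_reach {ι L : Type} (T : SimpleGraph ι) (p : L → ι) (A : Set ι)
    (S : Set (ι ⊕ L)) (hA : (T.induce A).Connected) (hS : ∀ x ∈ A, Sum.inl x ∈ S)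
    {x y : ι} (hx : x ∈ A) (hy : y ∈ A) :
    ((pend T p).induce S).Reachable ⟨.inl x, hS x hx⟩ ⟨.inl y, hS y hy⟩ := by
  let f : T.induce A →g (pend T p).induce S :=
    ⟨fun z => ⟨.inl z.1, hS z.1 z.2⟩, fun {a b} h => h⟩
  exact (hA.preconnected ⟨x, hx⟩ ⟨y, hy⟩).map f

theorem pend_isTree {ι L : Type} [Finite ι] [Finite L] (T : SimpleGraph ι) (p : L → ι)
    (hT : T.IsTree) : (pend T p).IsTree := by
  have hc : (pend T p).Connected := by
    obtain ⟨r⟩ := hT.connected.nonempty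
    let f : T →g pend T p := ⟨Sum.inl, fun {a b} h => h⟩
    have h1 : ∀ x, (pend T p).Reachable (.inl r) (.inl x) := fun x =>
      (hT.connected.preconnected r x).map f
    have h2 : ∀ z, (pend T p).Reachable (.inl r) z := by
      rintro (x | s)
      · exact h1 x
      · refine (h1 (p s)).trans (Adj.reachable ?_)
        exact (rfl : p s = p s)
    haveI : Nonempty (ι ⊕ L) := ⟨.inl r⟩
    exact ⟨fun a b => (h2 a).symm.trans (h2 b)⟩
  rw [isTree_iff_connected_and_card]
  refine ⟨hc, le_antisymm ?_ hc.card_vert_le_card_edgeSet_add_one⟩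
  have hT2 := (isTree_iff_connected_and_card.1 hT).2
  let g : T.edgeSet ⊕ L → Sym2 (ι ⊕ L) :=
    Sum.elim (fun e => e.1.map Sum.inl) (fun s => s(.inl (p s), .inr s))
  have hsub : (pend T p).edgeSet ⊆ Set.range g := by
    intro e
    induction e using Sym2.ind with
    | _ a b =>
      intro h
      rw [mem_edgeSet] at h
      rcases a with x | s <;> rcases b with y | t
      · exact ⟨.inl ⟨s(x, y), h⟩, rfl⟩
      · exact ⟨.inr t, by rw [show x = p t from h]; rfl⟩
      · exact ⟨.inr s, by rw [show y = p s from h]; exact Sym2.eq_swap⟩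
      · exact h.elim
  have h1 : Nat.card (pend T p).edgeSet ≤ Nat.card (Set.range g) :=
    Nat.card_mono (Set.toFinite _) hsub
  have h2 : Nat.card (Set.range g) ≤ Nat.card (T.edgeSet ⊕ L) := Finite.card_range_le g
  rw [Nat.card_sum] at h2 ⊢
  omega

/-- Given a tree decomposition `(T, β)` of a finite graph `G` and an independent set `L`,
`G` admits a tree decomposition in which every bag is either `N[s]` for some `s ∈ L`, or
`(β(x) \ L) ∪ N(β(x) ∩ L)` for some node `x` of `T`. -/
theorem stmt9 (V : Type) [Fintype V] (G : SimpleGraph V) (td : TreeDecomp G)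
    (L : Set V) (hL : L.Pairwise fun u v => ¬ G.Adj u v) :
    ∃ td' : TreeDecomp G, ∀ y : td'.ι,
      (∃ s ∈ L, td'.bag y = closedNbhd G s) ∨
      (∃ x : td.ι, td'.bag y = (td.bag x \ L) ∪ extNbhd G (td.bag x ∩ L)) := by
  classical
  haveI := td.fintype_ι
  choose p hp using fun s : L => td.mem_bag s.1
  have hNL : ∀ {s v}, s ∈ L → G.Adj s v → v ∉ L := fun hs h hv => hL hs hv h.ne h
  let bag : td.ι ⊕ L → Set V := Sum.elim
    (fun x => (td.bag x \ L) ∪ extNbhd G (td.bag x ∩ L)) (fun s => closedNbhd G s.1)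
  have hl : ∀ x v, v ∈ bag (.inl x) ↔
      v ∉ L ∧ (v ∈ td.bag x ∨ ∃ s ∈ L, s ∈ td.bag x ∧ G.Adj s v) := by
    intro x v
    simp only [bag, Sum.elim_inl, extNbhd, closedNbhd, Set.mem_union, Set.mem_diff,
      Set.mem_iUnion, Set.mem_insert_iff, mem_neighborSet, Set.mem_inter_iff]
    constructor
    · rintro (⟨h, h'⟩ | ⟨⟨s, hs, h⟩, h'⟩)
      · exact ⟨h', .inl h⟩
      · rcases h with rfl | h
        · exact (h' hs).elim
        · exact ⟨hNL hs.2 h, .inr ⟨s, hs.2, hs.1, h⟩⟩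
    · rintro ⟨h', h | ⟨s, hs, hx, h⟩⟩
      · exact .inl ⟨h, h'⟩
      · exact .inr ⟨⟨s, ⟨hx, hs⟩, .inr h⟩, fun h'' => h' h''.2⟩
  have hr : ∀ (s : L) v, v ∈ bag (.inr s) ↔ v = s.1 ∨ G.Adj s.1 v := fun s v => Iff.rfl
  refine ⟨⟨td.ι ⊕ L, Fintype.ofFinite _, pend td.T p, pend_isTree _ _ td.isTree, bag,
    ?_, ?_, ?_⟩, ?_⟩
  · intro v
    by_cases hv : v ∈ L
    · exact ⟨.inr ⟨v, hv⟩, (hr _ _).2 (.inl rfl)⟩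
    · obtain ⟨x, hx⟩ := td.mem_bag v
      exact ⟨.inl x, (hl _ _).2 ⟨hv, .inl hx⟩⟩
  · intro u v h
    by_cases hu : u ∈ L
    · exact ⟨.inr ⟨u, hu⟩, (hr _ _).2 (.inl rfl), (hr _ _).2 (.inr h)⟩
    by_cases hv : v ∈ L
    · exact ⟨.inr ⟨v, hv⟩, (hr _ _).2 (.inr h.symm), (hr _ _).2 (.inl rfl)⟩
    obtain ⟨x, hx, hy⟩ := td.edge_bag h
    exact ⟨.inl x, (hl _ _).2 ⟨hu, .inl hx⟩, (hl _ _).2 ⟨hv, .inl hy⟩⟩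
  · intro v
    by_cases hv : v ∈ L
    · have hmem : ∀ z, v ∈ bag z → z = .inr ⟨v, hv⟩ := by
        rintro (x | s) h
        · exact (((hl _ _).1 h).1 hv).elim
        · rcases (hr _ _).1 h with h | h
          · subst h; rfl
          · exact (hNL s.2 h hv).elim
      haveI : Nonempty {z | v ∈ bag z} := ⟨⟨.inr ⟨v, hv⟩, (hr _ _).2 (.inl rfl)⟩⟩
      refine ⟨fun a b => ?_⟩
      have : a = b := Subtype.ext ((hmem _ a.2).trans (hmem _ b.2).symm)
      rw [this]
    · obtain ⟨r, hrv⟩ := td.mem_bag v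
      have hv1 : ∀ x ∈ {x | v ∈ td.bag x}, Sum.inl x ∈ {z | v ∈ bag z} :=
        fun x hx => (hl _ _).2 ⟨hv, .inl hx⟩
      have hv2 : ∀ s ∈ L, G.Adj s v → ∀ x ∈ {x | s ∈ td.bag x}, Sum.inl x ∈ {z | v ∈ bag z} :=
        fun s hs h x hx => (hl _ _).2 ⟨hv, .inr ⟨s, hs, hx, h⟩⟩
      have key : ∀ s (hs : s ∈ L) (h : G.Adj s v) x (hx : x ∈ {x | s ∈ td.bag x}),
          ((pend td.T p).induce {z | v ∈ bag z}).Reachable ⟨.inl r, hv1 r hrv⟩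
            ⟨.inl x, hv2 s hs h x hx⟩ := by
        intro s hs h x hx
        obtain ⟨y, hy1, hy2⟩ := td.edge_bag h
        exact (pend_reach td.T p _ _ (td.bag_conn v) hv1 hrv hy2).trans
          (pend_reach td.T p _ _ (td.bag_conn s) (hv2 s hs h) hy1 hx)
      have h2 : ∀ z, ((pend td.T p).induce {z | v ∈ bag z}).Reachable ⟨.inl r, hv1 r hrv⟩ z := by
        rintro ⟨x | s, hz⟩
        · rcases ((hl _ _).1 hz).2 with h | ⟨s, hs, hx, h⟩
          · exact pend_reach td.T p _ _ (td.bag_conn v) hv1 hrv h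
          · exact key s hs h x hx
        · rcases (hr _ _).1 hz with h | h
          · exact (hv (h ▸ s.2)).elim
          · refine (key s.1 s.2 h (p s) (hp s)).trans (Adj.reachable ?_)
            exact (rfl : p s = p s)
      haveI : Nonempty {z | v ∈ bag z} := ⟨⟨.inl r, hv1 r hrv⟩⟩
      exact ⟨fun a b => (h2 a).symm.trans (h2 b)⟩
  · rintro (x | s)
    · exact .inr ⟨x, rfl⟩
    · exact .inl ⟨s.1, s.2, rfl⟩
end
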